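/- Finite Hilbert (Tricomi) transform of P_ν(ξ)P_ν(−ξ): for every ν ∈ ℂ∖ℤ and every x with −1 < x < 1, the Cauchy principal value P∫_{−1}^1 2 P_ν(ξ) P_ν(−ξ) / (π (x−ξ)) dξ equals ([P_ν(x)]² − [P_ν(−x)]²) / sin(νπ). -/

import Mathlib

open Real MeasureTheory intervalIntegral Filter Topology

/-- Legendre function of the first kind of complex degree `ν`, defined on `(-1, 1]`
via the Mehler–Dirichlet integral. -/
noncomputable def legendreP (ν : ℂ) (x : ℝ) : ℂ :=
  if x = 1 then 1
  else ((2 / π : ℝ) : ℂ) *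
    ∫ β in (0:ℝ)..(Real.arccos x),
      Complex.cos ((2*ν + 1) * (β:ℂ) / 2) / ((Real.sqrt (2 * (Real.cos β - x)) : ℝ) : ℂ)

/-!
With `m = ν + 1 / 2`, `P_ν(x)` is a multiple of the Mehler integral
`C(x) = ∫ cos (m β) / √(cos β - x) dβ`. Reflecting the angle in `C(-ξ)` makes `C(ξ) C(-ξ)` a double
integral over `(β, γ)` of `cos (m β) cos (m (π - γ))` against the arcsine kernel
`1 / √((cos β - ξ) (ξ - cos γ))`, which is zero unless `β < γ`. The Cauchy transform of this kernel
at `x` vanishes if `cos γ < x < cos β` and is `±π / √|(x - cos β) (x - cos γ)|` on the right, resp.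
left, of its support. As its truncations are bounded by a multiple of this last function, dominated
convergence gives the limit `π (T(-x) - T(x))`, where `T(x)` is the integral of
`cos (m β) cos (m (π - γ))` against `1 / √((cos β - x) (cos γ - x))` over `β < γ`.

It remains to compare with `C(x) ^ 2 - C(-x) ^ 2`. Write `2 cos (m β) cos (m γ)` as
`2 cos (m π) cos (m β) cos (m (π - γ))` plus `sin (m π)` times `f((γ - β) / 2) + f((γ + β) / 2)`,
where `f(δ) = sin (m (π - 2 δ))` is odd about `π / 2`. The second term contributes an even function
of `x`: in the variables half difference and half sum the inner integral is an elliptic integral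
whose quartic has roots `-1 < p < q < 1`, and this is invariant under `(p, q) ↦ (-q, -p)`. Hence
`C(x) ^ 2 - C(-x) ^ 2 = 2 cos (m π) (T(x) - T(-x))`, and `cos (m π) = -sin (ν π)`.
-/

/-- The truncated power `u₊ ^ (-1/2)`; the junk values of `√` and `⁻¹` make it vanish for `u ≤ 0`,
so that integrals of it need not record where the radicand is positive. -/
noncomputable def invSqrt (u : ℝ) : ℝ := (√u)⁻¹

lemma invSqrt_nonneg (u : ℝ) : 0 ≤ invSqrt u := inv_nonneg.2 (sqrt_nonneg u)

lemma invSqrt_of_nonpos {u : ℝ} (hu : u ≤ 0) : invSqrt u = 0 := by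
  rw [invSqrt, sqrt_eq_zero_of_nonpos hu, inv_zero]

lemma invSqrt_mul {u : ℝ} (hu : 0 ≤ u) (v : ℝ) : invSqrt (u * v) = invSqrt u * invSqrt v := by
  rw [invSqrt, sqrt_mul hu, mul_inv, invSqrt, invSqrt]

lemma invSqrt_sq_mul {c : ℝ} (hc : 0 ≤ c) (v : ℝ) : invSqrt (c ^ 2 * v) = c⁻¹ * invSqrt v := by
  rw [invSqrt_mul (sq_nonneg c), invSqrt, sqrt_sq hc]

lemma mul_invSqrt_self (u : ℝ) : u * invSqrt u = √u := by
  rw [invSqrt, ← div_eq_mul_inv, div_sqrt]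

lemma invSqrt_le_invSqrt {u v : ℝ} (hu : 0 < u) (huv : u ≤ v) : invSqrt v ≤ invSqrt u :=
  inv_anti₀ (sqrt_pos.2 hu) (sqrt_le_sqrt huv)

lemma invSqrt_abs (u : ℝ) : invSqrt |u| = invSqrt u + invSqrt (-u) := by
  rcases le_total 0 u with hu | hu
  · rw [abs_of_nonneg hu, invSqrt_of_nonpos (neg_nonpos.2 hu), add_zero]
  · rw [abs_of_nonpos hu, invSqrt_of_nonpos hu, zero_add]

@[fun_prop]
lemma measurable_invSqrt : Measurable invSqrt := by
  unfold invSqrt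
  fun_prop

/-- The arcsine density on `(a, b)`, up to the factor `π`; it vanishes off `(a, b)`. -/
noncomputable def arcsineKernel (a b t : ℝ) : ℝ := invSqrt (b - t) * invSqrt (t - a)

lemma arcsineKernel_nonneg (a b t : ℝ) : 0 ≤ arcsineKernel a b t :=
  mul_nonneg (invSqrt_nonneg _) (invSqrt_nonneg _)

lemma arcsineKernel_of_le {a b t : ℝ} (h : b ≤ t ∨ t ≤ a) : arcsineKernel a b t = 0 := by
  rcases h with h | h
  · rw [arcsineKernel, invSqrt_of_nonpos (sub_nonpos.2 h), zero_mul]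
  · rw [arcsineKernel, invSqrt_of_nonpos (sub_nonpos.2 h), mul_zero]

lemma arcsineKernel_of_notMem {a b t : ℝ} (ht : t ∉ Set.Ioo a b) : arcsineKernel a b t = 0 :=
  arcsineKernel_of_le <| by
    rw [Set.mem_Ioo, not_and_or, not_lt, not_lt] at ht
    exact ht.symm

lemma arcsineKernel_neg (a b t : ℝ) : arcsineKernel (-b) (-a) (-t) = arcsineKernel a b t := by
  rw [arcsineKernel, arcsineKernel, neg_sub_neg, neg_sub_neg, mul_comm]

lemma arcsineKernel_add_left (a b c t : ℝ) :
    arcsineKernel a b (c + t) = arcsineKernel (a - c) (b - c) t := by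
  rw [arcsineKernel, arcsineKernel]
  congr 2 <;> ring

@[fun_prop]
lemma measurable_arcsineKernel (a b : ℝ) : Measurable (arcsineKernel a b) := by
  unfold arcsineKernel
  fun_prop

section Arcsine

variable {a b : ℝ}

lemma integrableOn_and_integral_invSqrt_one_sub_sq_mul_deriv {u u' : ℝ → ℝ} (hab : a ≤ b)
    (hcont : ContinuousOn u (Set.Icc a b)) (hderiv : ∀ t ∈ Set.Ioo a b, HasDerivAt u (u' t) t)
    (hnonneg : ∀ t ∈ Set.Ioo a b, 0 ≤ u' t) (hlt : ∀ t ∈ Set.Ioo a b, 0 < 1 - u t ^ 2)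
    (ha : u a = -1) (hb : u b = 1) :
    IntegrableOn (fun t ↦ invSqrt (1 - u t ^ 2) * u' t) (Set.Ioo a b) ∧
      ∫ t in Set.Ioo a b, invSqrt (1 - u t ^ 2) * u' t = π := by
  have hcont' : ContinuousOn (fun t ↦ arcsin (u t)) (Set.Icc a b) :=
    continuous_arcsin.comp_continuousOn hcont
  have hderiv' (t) (ht : t ∈ Set.Ioo a b) :
      HasDerivAt (fun t ↦ arcsin (u t)) (invSqrt (1 - u t ^ 2) * u' t) t := by
    have hu := hlt t ht
    have hne : u t ≠ -1 ∧ u t ≠ 1 := by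
      constructor <;> intro h <;> norm_num [h] at hu
    exact ((hasDerivAt_arcsin hne.1 hne.2).comp t (hderiv t ht)).congr_deriv
      (by rw [one_div, invSqrt])
  have hint := integrableOn_deriv_of_nonneg hcont' hderiv' fun t ht ↦
    mul_nonneg (invSqrt_nonneg _) (hnonneg t ht)
  refine ⟨hint.mono_set Set.Ioo_subset_Ioc_self, ?_⟩
  rw [← integral_Ioc_eq_integral_Ioo, ← integral_of_le hab,
    integral_eq_sub_of_hasDerivAt_of_le hab hcont' hderiv'
      ((intervalIntegrable_iff_integrableOn_Ioc_of_le hab).2 hint), ha, hb, arcsin_one, arcsin_neg,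
    arcsin_one]
  ring

lemma integrableOn_and_integral_arcsineKernel (hab : a < b) :
    IntegrableOn (arcsineKernel a b) (Set.Ioo a b) ∧
      ∫ t in Set.Ioo a b, arcsineKernel a b t = π := by
  have hba : 0 < b - a := sub_pos.2 hab
  have hsq (t : ℝ) : 1 - ((2 * t - a - b) / (b - a)) ^ 2 =
      (2 / (b - a)) ^ 2 * ((b - t) * (t - a)) := by
    field_simp
    ring
  have hkernel (t) (ht : t ∈ Set.Ioo a b) :
      invSqrt (1 - ((2 * t - a - b) / (b - a)) ^ 2) * (2 / (b - a)) = arcsineKernel a b t := by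
    rw [hsq, invSqrt_sq_mul (by positivity), arcsineKernel, invSqrt_mul (sub_nonneg.2 ht.2.le)]
    field_simp
  obtain ⟨hint, hval⟩ := integrableOn_and_integral_invSqrt_one_sub_sq_mul_deriv
    (u := fun t ↦ (2 * t - a - b) / (b - a)) (u' := fun _ ↦ 2 / (b - a)) hab.le (by fun_prop)
    (fun t _ ↦ by
      simpa using ((((hasDerivAt_id t).const_mul 2).sub_const a).sub_const b).div_const (b - a))
    (fun t _ ↦ by positivity)
    (fun t ht ↦ by
      have := mul_pos (sub_pos.2 ht.2) (sub_pos.2 ht.1)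
      rw [hsq]
      positivity)
    (by field_simp; ring) (by field_simp; ring)
  exact ⟨hint.congr_fun hkernel measurableSet_Ioo,
    (setIntegral_congr_fun measurableSet_Ioo hkernel).symm.trans hval⟩

lemma integrable_arcsineKernel (a b : ℝ) : Integrable (arcsineKernel a b) := by
  rcases lt_or_ge a b with hab | hab
  · exact (integrableOn_and_integral_arcsineKernel hab).1.integrable_of_forall_notMem_eq_zero
      fun t ht ↦ arcsineKernel_of_notMem ht
  · have hzero : arcsineKernel a b = 0 := funext fun t ↦
      arcsineKernel_of_notMem fun ht ↦ (ht.1.trans ht.2).not_ge hab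
    exact hzero ▸ integrable_zero ℝ ℝ volume

lemma integral_arcsineKernel_le (a b : ℝ) : ∫ t, arcsineKernel a b t ≤ π := by
  rw [← setIntegral_eq_integral_of_forall_compl_eq_zero fun t ↦ arcsineKernel_of_notMem]
  rcases lt_or_ge a b with hab | hab
  · exact (integrableOn_and_integral_arcsineKernel hab).2.le
  · rw [Set.Ioo_eq_empty hab.not_gt, setIntegral_empty]
    exact pi_pos.le

lemma integrableOn_and_integral_arcsineKernel_div_id (ha : 0 < a) (hab : a < b) :
    IntegrableOn (fun t ↦ arcsineKernel a b t / t) (Set.Ioo a b) ∧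
      ∫ t in Set.Ioo a b, arcsineKernel a b t / t = π * (invSqrt a * invSqrt b) := by
  have hb : 0 < b := ha.trans hab
  have hba : 0 < b - a := sub_pos.2 hab
  have hsq (t) (ht : 0 < t) : 1 - ((a + b - 2 * a * b / t) / (b - a)) ^ 2 =
      (2 / ((b - a) * t)) ^ 2 * ((a * b) * ((b - t) * (t - a))) := by
    field_simp
    ring
  have hkernel (t) (ht : t ∈ Set.Ioo a b) :
      invSqrt (1 - ((a + b - 2 * a * b / t) / (b - a)) ^ 2) * (2 * a * b / t ^ 2 / (b - a)) =
        √(a * b) * (arcsineKernel a b t / t) := by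
    have ht0 : 0 < t := ha.trans ht.1
    rw [hsq t ht0, invSqrt_sq_mul (by positivity), invSqrt_mul (by positivity),
      invSqrt_mul (sub_nonneg.2 ht.2.le), ← mul_invSqrt_self, arcsineKernel]
    field_simp
  obtain ⟨hint, hval⟩ := integrableOn_and_integral_invSqrt_one_sub_sq_mul_deriv
    (u := fun t ↦ (a + b - 2 * a * b / t) / (b - a)) (u' := fun t ↦ 2 * a * b / t ^ 2 / (b - a))
    hab.le
    ((continuousOn_const.sub (continuousOn_const.div continuousOn_id
      fun t ht ↦ (ha.trans_le ht.1).ne')).div_const _)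
    (fun t ht ↦ by
      have := (((hasDerivAt_inv (ha.trans ht.1).ne').const_mul (2 * a * b)).const_sub
        (a + b)).div_const (b - a)
      simpa [div_eq_mul_inv] using this)
    (fun t _ ↦ by positivity)
    (fun t ht ↦ by
      have := mul_pos (sub_pos.2 ht.2) (sub_pos.2 ht.1)
      have := ha.trans ht.1
      rw [hsq t this]
      positivity)
    (by field_simp; ring) (by field_simp; ring)
  have hroot : √(a * b) ≠ 0 := (sqrt_pos.2 (by positivity)).ne'
  have hint' := hint.congr_fun hkernel measurableSet_Ioo
  rw [setIntegral_congr_fun measurableSet_Ioo hkernel, MeasureTheory.integral_const_mul] at hval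
  refine ⟨(integrable_const_mul_iff hroot.isUnit _).1 hint', ?_⟩
  rw [← invSqrt_mul ha.le, ← hval, invSqrt, mul_right_comm, mul_inv_cancel₀ hroot, one_mul]

end Arcsine

section CauchyTruncation

/-- The part of the Cauchy integral of the arcsine kernel at the singularity `0` over `(ε, ∞)`. -/
noncomputable def tailIntegral (a b ε : ℝ) : ℝ := ∫ t in Set.Ioi ε, arcsineKernel a b t / t

/-- The Cauchy integral of the arcsine kernel at `x` with the `ε`-neighbourhood of `x` removed. -/
noncomputable def truncatedCauchy (a b x ε : ℝ) : ℝ :=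
  ∫ ξ in {ξ | ε < |ξ - x|}, arcsineKernel a b ξ / (x - ξ)

lemma measurableSet_lt_abs_sub (x ε : ℝ) : MeasurableSet {ξ : ℝ | ε < |ξ - x|} :=
  measurableSet_lt (by fun_prop) (by fun_prop)

lemma setIntegral_lt_abs_sub {f : ℝ → ℝ} {x ε : ℝ} (hε : 0 ≤ ε)
    (hf : IntegrableOn f {ξ | ε < |ξ - x|}) :
    ∫ ξ in {ξ | ε < |ξ - x|}, f ξ =
      (∫ t in Set.Ioi ε, f (x - t)) + ∫ t in Set.Ioi ε, f (x + t) := by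
  have hset : {ξ : ℝ | ε < |ξ - x|} = Set.Iio (x - ε) ∪ Set.Ioi (x + ε) := by
    ext ξ
    simp only [Set.mem_ofPred_eq, Set.mem_union, Set.mem_Iio, Set.mem_Ioi, lt_abs]
    grind
  rw [hset] at hf ⊢
  have hdisj : Disjoint (Set.Iio (x - ε)) (Set.Ioi (x + ε)) :=
    (Set.Iic_disjoint_Ioi (by linarith)).mono_left Set.Iio_subset_Iic_self
  have hleft := (Measure.measurePreserving_sub_left volume x).setIntegral_preimage_emb
    (measurableEmbedding_subLeft x) f (Set.Iio (x - ε))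
  have hright := (measurePreserving_add_left volume x).setIntegral_preimage_emb
    (measurableEmbedding_addLeft x) f (Set.Ioi (x + ε))
  rw [setIntegral_union hdisj measurableSet_Ioi hf.left_of_union hf.right_of_union, ← hleft,
    ← hright, Set.preimage_const_sub_Iio, Set.preimage_const_add_Ioi, sub_sub_cancel,
    add_sub_cancel_left]

lemma integrableOn_arcsineKernel_div_sub (a b x : ℝ) {ε : ℝ} (hε : 0 < ε) :
    IntegrableOn (fun ξ ↦ arcsineKernel a b ξ / (x - ξ)) {ξ | ε < |ξ - x|} := by
  refine (integrable_arcsineKernel a b).integrableOn.mul_bdd (c := ε⁻¹)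
    (by fun_prop) ?_
  filter_upwards [ae_restrict_mem (measurableSet_lt_abs_sub x ε)] with ξ hξ
  rw [norm_inv, norm_eq_abs, abs_sub_comm]
  exact inv_anti₀ hε (le_of_lt hξ)

lemma truncatedCauchy_eq_tailIntegral_sub (a b x : ℝ) {ε : ℝ} (hε : 0 < ε) :
    truncatedCauchy a b x ε =
      tailIntegral (x - b) (x - a) ε - tailIntegral (a - x) (b - x) ε := by
  rw [truncatedCauchy,
    setIntegral_lt_abs_sub hε.le (integrableOn_arcsineKernel_div_sub a b x hε), sub_eq_add_neg,
    tailIntegral, tailIntegral, ← MeasureTheory.integral_neg]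
  congr 2 <;> ext t
  · rw [sub_sub_cancel, sub_eq_add_neg x t, arcsineKernel_add_left, ← neg_neg t,
      ← arcsineKernel_neg, neg_sub, neg_sub, neg_neg, neg_neg]
  · rw [sub_add_cancel_left, div_neg, arcsineKernel_add_left]

lemma tailIntegral_of_nonpos {b ε : ℝ} (a : ℝ) (hb : b ≤ 0) (hε : 0 ≤ ε) :
    tailIntegral a b ε = 0 :=
  setIntegral_eq_zero_of_forall_eq_zero fun t ht ↦ by
    rw [arcsineKernel_of_le (.inl (hb.trans (hε.trans (le_of_lt ht)))), zero_div]

section PositiveSupport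

variable {a b ε : ℝ}

lemma tailIntegral_of_le (ha : 0 < a) (hab : a < b) (hεa : ε ≤ a) :
    tailIntegral a b ε = π * (invSqrt a * invSqrt b) := by
  rw [tailIntegral, ← (integrableOn_and_integral_arcsineKernel_div_id ha hab).2]
  exact setIntegral_eq_of_subset_of_forall_sdiff_eq_zero measurableSet_Ioi
    (fun t ht ↦ hεa.trans_lt ht.1) fun t ht ↦ by rw [arcsineKernel_of_notMem ht.2, zero_div]

lemma abs_tailIntegral_le (ha : 0 < a) (hab : a < b) (hε : 0 ≤ ε) :
    |tailIntegral a b ε| ≤ π * (invSqrt a * invSqrt b) := by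
  have hnonneg (t) (ht : t ∈ Set.Ioi (0 : ℝ)) : 0 ≤ arcsineKernel a b t / t :=
    div_nonneg (arcsineKernel_nonneg a b t) (le_of_lt ht)
  have hint : IntegrableOn (fun t ↦ arcsineKernel a b t / t) (Set.Ioi 0) :=
    (integrableOn_and_integral_arcsineKernel_div_id ha hab).1.of_forall_sdiff_eq_zero
      measurableSet_Ioi fun t ht ↦ by rw [arcsineKernel_of_notMem ht.2, zero_div]
  have hsub : Set.Ioi ε ⊆ Set.Ioi 0 := Set.Ioi_subset_Ioi hε
  rw [← tailIntegral_of_le ha hab ha.le, tailIntegral,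
    abs_of_nonneg (setIntegral_nonneg measurableSet_Ioi fun t ht ↦ hnonneg t (hsub ht))]
  exact setIntegral_mono_set hint (ae_restrict_of_forall_mem measurableSet_Ioi hnonneg)
    hsub.eventuallyLE

end PositiveSupport

section InteriorSingularity

variable {A B : ℝ}

/-- The sum of square roots `√(A (B - t)) + √(B (t + A))`, whose logarithm occurs in the
primitive of `arcsineKernel (-A) B t / t`. -/
noncomputable def rootSum (A B t : ℝ) : ℝ := √(A * (B - t)) + √(B * (t + A))

/-- Up to the factor `-(A B) ^ (-1/2)`, the primitive of `arcsineKernel (-A) B t / t` on `(0, B)`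
that vanishes at `B`. -/
noncomputable def tailPrimitive (A B t : ℝ) : ℝ := 2 * log (rootSum A B t) - log t - log (A + B)

lemma rootSum_pos (hA : 0 < A) (hB : 0 < B) {t : ℝ} (ht : 0 ≤ t) : 0 < rootSum A B t :=
  add_pos_of_nonneg_of_pos (sqrt_nonneg _) (sqrt_pos.2 (by positivity))

lemma continuous_rootSum (A B : ℝ) : Continuous (rootSum A B) := by
  unfold rootSum
  fun_prop

lemma rootSum_zero_comm (A B : ℝ) : rootSum A B 0 = rootSum B A 0 := by
  rw [rootSum, rootSum, sub_zero, sub_zero, zero_add, zero_add, add_comm]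

lemma tailPrimitive_self (hA : 0 < A) (hB : 0 < B) : tailPrimitive A B B = 0 := by
  have hlog : 2 * log (rootSum A B B) = log B + log (A + B) := by
    rw [rootSum, sub_self, mul_zero, sqrt_zero, zero_add, log_sqrt (by positivity),
      log_mul hB.ne' (by positivity), add_comm B A]
    ring
  rw [tailPrimitive, hlog]
  ring

lemma hasDerivAt_tailPrimitive (hA : 0 < A) {t : ℝ} (ht : 0 < t) (htB : t < B) :
    HasDerivAt (fun t ↦ -(invSqrt A * invSqrt B * tailPrimitive A B t))
      (arcsineKernel (-A) B t / t) t := by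
  have hB : 0 < B := ht.trans htB
  have hBt : 0 < B - t := sub_pos.2 htB
  have htA : 0 < t + A := by positivity
  have hroot : HasDerivAt (rootSum A B)
      (A * -1 / (2 * √(A * (B - t))) + B * 1 / (2 * √(B * (t + A)))) t :=
    ((((hasDerivAt_id t).const_sub B).const_mul A).sqrt (mul_pos hA hBt).ne').add
      ((((hasDerivAt_id t).add_const A).const_mul B).sqrt (mul_pos hB htA).ne')
  refine (((((hroot.log (rootSum_pos hA hB ht.le).ne').const_mul 2).sub
    (hasDerivAt_log ht.ne')).sub_const _).const_mul _).neg.congr_deriv ?_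
  rw [arcsineKernel, sub_neg_eq_add]
  simp only [rootSum, invSqrt, sqrt_mul hA.le, sqrt_mul hB.le]
  have hA' := sq_sqrt hA.le
  have hB' := sq_sqrt hB.le
  have hBt' := sq_sqrt hBt.le
  have htA' := sq_sqrt htA.le
  have := sqrt_pos.2 hA
  have := sqrt_pos.2 hB
  have := sqrt_pos.2 hBt
  have := sqrt_pos.2 htA
  generalize √A = p at *
  generalize √B = q at *
  generalize √(B - t) = r at *
  generalize √(t + A) = s at *
  subst hA' hB'
  obtain rfl : t = s ^ 2 - p ^ 2 := by linarith
  field_simp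
  linear_combination (p * s) * hBt'

lemma tailIntegral_of_neg_of_pos (hA : 0 < A) (hB : 0 < B) {ε : ℝ} (hε : 0 < ε) :
    tailIntegral (-A) B ε = invSqrt A * invSqrt B * tailPrimitive A B (min B ε) := by
  set η := min B ε
  have hη : 0 < η := lt_min hB hε
  have hηB : η ≤ B := min_le_left B ε
  have hcont : ContinuousOn (fun t ↦ -(invSqrt A * invSqrt B * tailPrimitive A B t))
      (Set.Icc η B) := by
    unfold tailPrimitive
    exact (continuousOn_const.mul (((continuousOn_const.mul
      ((continuous_rootSum A B).continuousOn.log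
        fun t ht ↦ (rootSum_pos hA hB (hη.le.trans ht.1)).ne')).sub
      (continuousOn_id.log fun t ht ↦ (hη.trans_le ht.1).ne')).sub continuousOn_const)).neg
  have hderiv (t) (ht : t ∈ Set.Ioo η B) := hasDerivAt_tailPrimitive hA (hη.trans ht.1) ht.2
  have hint := integrableOn_deriv_of_nonneg hcont hderiv fun t ht ↦
    div_nonneg (arcsineKernel_nonneg _ _ t) (hη.trans ht.1).le
  have hsupport : tailIntegral (-A) B ε = ∫ t in Set.Ioc η B, arcsineKernel (-A) B t / t := by
    refine setIntegral_eq_of_subset_of_forall_sdiff_eq_zero measurableSet_Ioi ?_ ?_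
    · exact fun t ht ↦ (min_lt_iff.1 ht.1).resolve_left ht.2.not_gt
    · rintro t ⟨ht, ht'⟩
      have hBt : B ≤ t := not_lt.1 fun h ↦ ht' ⟨(min_le_right B ε).trans_lt ht, h.le⟩
      rw [arcsineKernel_of_le (.inl hBt), zero_div]
  rw [hsupport, ← integral_of_le hηB, integral_eq_sub_of_hasDerivAt_of_le hηB hcont hderiv
    ((intervalIntegrable_iff_integrableOn_Ioc_of_le hηB).2 hint), tailPrimitive_self hA hB]
  ring

/-- The common value around which both one-sided primitives at distance `ε` from the singularity
stay, up to `2 log 2`; it is symmetric in `A` and `B`, so it cancels in the Cauchy truncation. -/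
noncomputable def tailScale (A B ε : ℝ) : ℝ := log (A * B / ε + A + B) - log (A + B)

lemma tailScale_comm (A B ε : ℝ) : tailScale A B ε = tailScale B A ε := by
  rw [tailScale, tailScale, mul_comm, add_right_comm, add_comm A B]

lemma rootSum_sq_mem_Icc (hA : 0 ≤ A) (hB : 0 ≤ B) {t : ℝ} (ht : 0 ≤ t) (htB : t ≤ B) :
    rootSum A B t ^ 2 ∈ Set.Icc (A * (B - t) + B * (t + A)) (2 * (A * (B - t) + B * (t + A))) := by
  have hleft := mul_nonneg hA (sub_nonneg.2 htB)
  have hright : 0 ≤ B * (t + A) := by positivity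
  have hprod := mul_nonneg (sqrt_nonneg (A * (B - t))) (sqrt_nonneg (B * (t + A)))
  have hdiff := sq_nonneg (√(A * (B - t)) - √(B * (t + A)))
  rw [rootSum]
  constructor <;> nlinarith [sq_sqrt hleft, sq_sqrt hright, hprod, hdiff]

lemma rootSum_min_sq_mem_Icc (hA : 0 < A) (hB : 0 < B) {ε : ℝ} (hε : 0 < ε) :
    rootSum A B (min B ε) ^ 2 ∈ Set.Icc ((A * B / ε + A + B) * min B ε / 2)
      (4 * ((A * B / ε + A + B) * min B ε)) := by
  have hsq := rootSum_sq_mem_Icc hA.le hB.le (lt_min hB hε).le (min_le_left B ε)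
  suffices (A * B / ε + A + B) * min B ε / 2 ≤ A * (B - min B ε) + B * (min B ε + A) ∧
      A * (B - min B ε) + B * (min B ε + A) ≤ 2 * ((A * B / ε + A + B) * min B ε) from
    ⟨this.1.trans hsq.1, by linarith [hsq.2, this.2]⟩
  rcases le_total B ε with hle | hle
  · have hquot : A * B / ε * B ≤ A * B := by
      rw [div_mul_eq_mul_div, div_le_iff₀ hε]
      exact mul_le_mul_of_nonneg_left hle (by positivity)
    have hquot0 : 0 ≤ A * B / ε * B := by positivity
    rw [min_eq_left hle]
    constructor <;> nlinarith [mul_pos hA hB]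
  · have hquot : (A * B / ε + A + B) * ε = A * B + (A + B) * ε := by
      field_simp
      ring
    rw [min_eq_right hle, hquot]
    constructor <;> nlinarith [mul_pos hA hε, mul_pos hB hε]

lemma tailPrimitive_sub_tailScale_mem_Icc (hA : 0 < A) (hB : 0 < B) {ε : ℝ} (hε : 0 < ε) :
    tailPrimitive A B (min B ε) - tailScale A B ε ∈ Set.Icc (-log 2) (2 * log 2) := by
  have hη : 0 < min B ε := lt_min hB hε
  have hq : 0 < A * B / ε + A + B := by positivity
  have hroot := rootSum_pos hA hB hη.le
  have hmem := rootSum_min_sq_mem_Icc hA hB hε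
  have hlower := log_le_log (by positivity) hmem.1
  have hupper := log_le_log (by positivity) hmem.2
  rw [log_div (by positivity) two_ne_zero, log_mul hq.ne' hη.ne', log_pow] at hlower
  rw [show (4 : ℝ) = 2 ^ 2 by norm_num, log_mul (by positivity) (by positivity),
    log_mul hq.ne' hη.ne', log_pow, log_pow] at hupper
  push_cast at hlower hupper
  rw [tailPrimitive, tailScale]
  constructor <;> linarith

lemma abs_tailPrimitive_sub_le (hA : 0 < A) (hB : 0 < B) {ε : ℝ} (hε : 0 < ε) :
    |tailPrimitive B A (min A ε) - tailPrimitive A B (min B ε)| ≤ 4 := by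
  have hleft := tailPrimitive_sub_tailScale_mem_Icc hB hA hε
  have hright := tailPrimitive_sub_tailScale_mem_Icc hA hB hε
  rw [tailScale_comm] at hleft
  have := log_two_lt_d9
  rw [abs_le]
  constructor <;> linarith [hleft.1, hleft.2, hright.1, hright.2]

lemma tendsto_tailPrimitive_sub (hA : 0 < A) (hB : 0 < B) :
    Tendsto (fun ε ↦ tailPrimitive B A (min A ε) - tailPrimitive A B (min B ε))
      (𝓝[>] 0) (𝓝 0) := by
  have hlog {A B : ℝ} (hA : 0 < A) (hB : 0 < B) :
      Tendsto (fun ε ↦ log (rootSum A B ε)) (𝓝[>] 0) (𝓝 (log (rootSum A B 0))) :=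
    ((continuous_rootSum A B).continuousAt.log (rootSum_pos hA hB le_rfl).ne').tendsto.mono_left
      nhdsWithin_le_nhds
  have hlim := ((hlog hB hA).sub (hlog hA hB)).const_mul 2
  rw [rootSum_zero_comm, sub_self, mul_zero] at hlim
  refine hlim.congr' ?_
  filter_upwards [mem_nhdsWithin_of_mem_nhds (Iio_mem_nhds (lt_min hA hB))] with ε hε
  obtain ⟨hεA, hεB⟩ := lt_min_iff.1 (Set.mem_Iio.1 hε)
  rw [min_eq_right hεA.le, min_eq_right hεB.le, tailPrimitive, tailPrimitive, add_comm B A]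
  ring

end InteriorSingularity

section Truncation

variable {a b x : ℝ}

lemma truncatedCauchy_of_mem_Ioo (hax : a < x) (hxb : x < b) {ε : ℝ} (hε : 0 < ε) :
    truncatedCauchy a b x ε = invSqrt (x - a) * invSqrt (b - x) *
      (tailPrimitive (b - x) (x - a) (min (x - a) ε) -
        tailPrimitive (x - a) (b - x) (min (b - x) ε)) := by
  have hA := sub_pos.2 hax
  have hB := sub_pos.2 hxb
  rw [truncatedCauchy_eq_tailIntegral_sub a b x hε, ← neg_sub b x, ← neg_sub x a,
    tailIntegral_of_neg_of_pos hA hB hε, tailIntegral_of_neg_of_pos hB hA hε]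
  ring

lemma truncatedCauchy_of_ge (hba : b ≤ a) (x ε : ℝ) : truncatedCauchy a b x ε = 0 :=
  setIntegral_eq_zero_of_forall_eq_zero fun ξ _ ↦ by
    rw [arcsineKernel_of_notMem fun h ↦ (h.1.trans h.2).not_ge hba, zero_div]

lemma truncatedCauchy_of_lt_left (hxa : x < a) {ε : ℝ} (hε : 0 < ε) :
    truncatedCauchy a b x ε = -tailIntegral (a - x) (b - x) ε := by
  rw [truncatedCauchy_eq_tailIntegral_sub a b x hε,
    tailIntegral_of_nonpos _ (sub_nonpos.2 hxa.le) hε.le, zero_sub]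

lemma truncatedCauchy_of_right_lt (hbx : b < x) {ε : ℝ} (hε : 0 < ε) :
    truncatedCauchy a b x ε = tailIntegral (x - b) (x - a) ε := by
  rw [truncatedCauchy_eq_tailIntegral_sub a b x hε,
    tailIntegral_of_nonpos _ (sub_nonpos.2 hbx.le) hε.le, sub_zero]

lemma abs_truncatedCauchy_le (hxa : x ≠ a) (hxb : x ≠ b) {ε : ℝ} (hε : 0 < ε) :
    |truncatedCauchy a b x ε| ≤ 4 * (invSqrt |x - a| * invSqrt |x - b|) := by
  have hnonneg : 0 ≤ invSqrt |x - a| * invSqrt |x - b| :=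
    mul_nonneg (invSqrt_nonneg _) (invSqrt_nonneg _)
  rcases le_or_gt b a with hab | hab
  · rw [truncatedCauchy_of_ge hab, abs_zero]
    positivity
  rcases lt_or_gt_of_ne hxa with hxa | hax
  · have hA := sub_pos.2 hxa
    rw [abs_sub_comm x a, abs_sub_comm x b, abs_of_pos hA,
      abs_of_pos (sub_pos.2 (hxa.trans hab))] at hnonneg ⊢
    rw [truncatedCauchy_of_lt_left hxa hε, abs_neg]
    exact (abs_tailIntegral_le hA (sub_lt_sub_right hab x) hε.le).trans
      (mul_le_mul_of_nonneg_right pi_le_four hnonneg)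
  rcases lt_or_gt_of_ne hxb with hxb | hbx
  · rw [abs_of_pos (sub_pos.2 hax), abs_sub_comm x b, abs_of_pos (sub_pos.2 hxb)] at hnonneg ⊢
    rw [truncatedCauchy_of_mem_Ioo hax hxb hε, abs_mul, abs_of_nonneg hnonneg, mul_comm 4]
    exact mul_le_mul_of_nonneg_left
      (abs_tailPrimitive_sub_le (sub_pos.2 hax) (sub_pos.2 hxb) hε) hnonneg
  · have hB := sub_pos.2 hbx
    rw [abs_of_pos (sub_pos.2 hax), abs_of_pos hB, mul_comm (invSqrt _)] at hnonneg ⊢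
    rw [truncatedCauchy_of_right_lt hbx hε]
    exact (abs_tailIntegral_le hB (sub_lt_sub_left hab x) hε.le).trans
      (mul_le_mul_of_nonneg_right pi_le_four hnonneg)

lemma tendsto_truncatedCauchy (hab : a < b) (hxa : x ≠ a) (hxb : x ≠ b) :
    Tendsto (truncatedCauchy a b x) (𝓝[>] 0)
      (𝓝 (π * (invSqrt (x - a) * invSqrt (x - b) - invSqrt (a - x) * invSqrt (b - x)))) := by
  rcases lt_or_gt_of_ne hxa with hxa | hax
  · refine tendsto_const_nhds.congr' ?_
    filter_upwards [Ioo_mem_nhdsGT (sub_pos.2 hxa)] with ε hε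
    rw [truncatedCauchy_of_lt_left hxa hε.1,
      tailIntegral_of_le (sub_pos.2 hxa) (sub_lt_sub_right hab x) hε.2.le,
      invSqrt_of_nonpos (sub_nonpos.2 hxa.le)]
    ring
  rcases lt_or_gt_of_ne hxb with hxb | hbx
  · have hlim := (tendsto_tailPrimitive_sub (sub_pos.2 hax) (sub_pos.2 hxb)).const_mul
      (invSqrt (x - a) * invSqrt (b - x))
    rw [invSqrt_of_nonpos (sub_nonpos.2 hxb.le), invSqrt_of_nonpos (sub_nonpos.2 hax.le), mul_zero,
      zero_mul, sub_zero, mul_zero]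
    rw [mul_zero] at hlim
    refine hlim.congr' ?_
    filter_upwards [self_mem_nhdsWithin] with ε hε
    exact (truncatedCauchy_of_mem_Ioo hax hxb hε).symm
  · refine tendsto_const_nhds.congr' ?_
    filter_upwards [Ioo_mem_nhdsGT (sub_pos.2 hbx)] with ε hε
    rw [truncatedCauchy_of_right_lt hbx hε.1,
      tailIntegral_of_le (sub_pos.2 hbx) (sub_lt_sub_left hab x) hε.2.le,
      invSqrt_of_nonpos (u := b - x) (sub_nonpos.2 hbx.le)]
    ring

end Truncation

end CauchyTruncation

section CosineSubstitution

variable {E : Type*} [NormedAddCommGroup E] [NormedSpace ℝ E] {α : ℝ}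

lemma Ioo_zero_subset_Icc_pi (hα : α ∈ Set.Icc 0 π) : Set.Ioo 0 α ⊆ Set.Icc 0 π :=
  Set.Ioo_subset_Icc_self.trans (Set.Icc_subset_Icc_right hα.2)

lemma image_cos_Ioo_zero (hα : α ∈ Set.Icc 0 π) : cos '' Set.Ioo 0 α = Set.Ioo (cos α) 1 := by
  ext X
  constructor
  · rintro ⟨t, ht, rfl⟩
    have htπ := Ioo_zero_subset_Icc_pi hα ht
    exact ⟨strictAntiOn_cos htπ hα ht.2,
      cos_zero ▸ strictAntiOn_cos (Set.left_mem_Icc.2 pi_pos.le) htπ ht.1⟩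
  · intro hX
    have hX' : -1 ≤ X := (neg_one_le_cos α).trans hX.1.le
    refine ⟨arccos X, ⟨arccos_pos.2 hX.2, ?_⟩, cos_arccos hX' hX.2.le⟩
    rw [← strictAntiOn_cos.lt_iff_gt hα ⟨arccos_nonneg X, arccos_le_pi X⟩,
      cos_arccos hX' hX.2.le]
    exact hX.1

lemma abs_neg_sin_smul_invSqrt_smul {t : ℝ} (ht : sin t ≠ 0) (y : E) :
    |-sin t| • invSqrt (1 - cos t ^ 2) • y = y := by
  rw [← sin_sq, invSqrt, sqrt_sq_eq_abs, abs_neg, smul_inv_smul₀ (abs_ne_zero.2 ht)]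

lemma integral_comp_cos (hα : α ∈ Set.Icc 0 π) (f : ℝ → E) :
    ∫ t in Set.Ioo 0 α, f (cos t) = ∫ X in Set.Ioo (cos α) 1, invSqrt (1 - X ^ 2) • f X := by
  rw [← image_cos_Ioo_zero hα, integral_image_eq_integral_abs_deriv_smul measurableSet_Ioo
    (fun t _ ↦ (hasDerivAt_cos t).hasDerivWithinAt)
    (injOn_cos.mono (Ioo_zero_subset_Icc_pi hα))]
  exact setIntegral_congr_fun measurableSet_Ioo fun t ht ↦
    (abs_neg_sin_smul_invSqrt_smul (sin_pos_of_pos_of_lt_pi ht.1 (ht.2.trans_le hα.2)).ne' _).symm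

lemma integrableOn_comp_cos_iff (hα : α ∈ Set.Icc 0 π) (f : ℝ → E) :
    IntegrableOn (fun t ↦ f (cos t)) (Set.Ioo 0 α) ↔
      IntegrableOn (fun X ↦ invSqrt (1 - X ^ 2) • f X) (Set.Ioo (cos α) 1) := by
  rw [← image_cos_Ioo_zero hα, integrableOn_image_iff_integrableOn_abs_deriv_smul measurableSet_Ioo
    (fun t _ ↦ (hasDerivAt_cos t).hasDerivWithinAt)
    (injOn_cos.mono (Ioo_zero_subset_Icc_pi hα))]
  exact integrableOn_congr_fun (fun t ht ↦ (abs_neg_sin_smul_invSqrt_smul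
    (sin_pos_of_pos_of_lt_pi ht.1 (ht.2.trans_le hα.2)).ne' _).symm) measurableSet_Ioo

lemma integrableOn_invSqrt_cos_sub {x : ℝ} (hx : -1 < x) :
    IntegrableOn (fun β ↦ invSqrt (cos β - x)) (Set.Ioo 0 π) := by
  rw [integrableOn_comp_cos_iff ⟨pi_pos.le, le_rfl⟩ fun X ↦ invSqrt (X - x)]
  refine ((integrable_arcsineKernel x 1).const_mul (invSqrt (1 + x))).integrableOn.mono'
    (by fun_prop) ?_
  refine ae_restrict_of_forall_mem measurableSet_Ioo fun X hX ↦ ?_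
  rw [cos_pi] at hX
  rw [smul_eq_mul, norm_of_nonneg (mul_nonneg (invSqrt_nonneg _) (invSqrt_nonneg _)),
    show 1 - X ^ 2 = (1 - X) * (1 + X) by ring, invSqrt_mul (sub_nonneg.2 hX.2.le), arcsineKernel]
  rcases le_or_gt X x with hXx | hxX
  · rw [invSqrt_of_nonpos (sub_nonpos.2 hXx), mul_zero, mul_zero, mul_zero]
  · rw [mul_comm (invSqrt (1 - X)), mul_assoc]
    exact mul_le_mul_of_nonneg_right (invSqrt_le_invSqrt (by linarith) (by linarith))
      (mul_nonneg (invSqrt_nonneg _) (invSqrt_nonneg _))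

end CosineSubstitution

section EllipticIntegral

/-- For `-1 < p < q < 1`, the elliptic integral of the first kind attached to the quartic with roots
`±1`, `p`, `q`, taken between the two largest roots. -/
noncomputable def ellipticIntegral (q p : ℝ) : ℝ :=
  ∫ X in Set.Ioo q 1, invSqrt (1 - X ^ 2) * invSqrt ((X - p) * (X - q))

/-- The form of `ellipticIntegral` with the interval of integration sent to `(0, ∞)`. -/
noncomputable def cubicIntegral (a b c d : ℝ) : ℝ :=
  ∫ s in Set.Ioi 0, invSqrt (s * ((c + a * s) * (b + d * s)))

lemma cubicIntegral_comm (a b : ℝ) {c d : ℝ} (hc : 0 < c) (hd : 0 < d) :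
    cubicIntegral a b c d = cubicIntegral b a c d := by
  have himage : (fun s ↦ c / d * s⁻¹) '' Set.Ioi 0 = Set.Ioi 0 := by
    ext s
    refine ⟨?_, fun hs ↦ ⟨c / d * s⁻¹, ?_, ?_⟩⟩
    · rintro ⟨t, ht, rfl⟩
      have ht : 0 < t := ht
      exact Set.mem_Ioi.2 (by positivity)
    · have hs : 0 < s := hs
      exact Set.mem_Ioi.2 (by positivity)
    · field_simp
  have hinj : Set.InjOn (fun s ↦ c / d * s⁻¹) (Set.Ioi 0) := fun s _ t _ hst ↦
    inv_injective (mul_left_cancel₀ (div_pos hc hd).ne' hst)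
  have hderiv (s) (hs : s ∈ Set.Ioi (0 : ℝ)) :=
    ((hasDerivAt_inv (ne_of_gt hs)).const_mul (c / d)).hasDerivWithinAt (s := Set.Ioi 0)
  rw [cubicIntegral, ← himage,
    integral_image_eq_integral_abs_deriv_smul measurableSet_Ioi hderiv hinj, cubicIntegral]
  refine setIntegral_congr_fun measurableSet_Ioi fun s hs ↦ ?_
  have hs : 0 < s := hs
  have hcubic : c / d * s⁻¹ * ((c + a * (c / d * s⁻¹)) * (b + d * (c / d * s⁻¹))) =
      (c / (d * s ^ 2)) ^ 2 * (s * ((c + b * s) * (a + d * s))) := by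
    field_simp
    ring
  simp only [smul_eq_mul]
  rw [hcubic, invSqrt_sq_mul (by positivity), mul_neg, abs_neg, abs_of_pos (by positivity)]
  field_simp

lemma image_mobius_Ioi {q : ℝ} (hq : q < 1) :
    (fun s ↦ q + (1 - q) * (1 + s)⁻¹) '' Set.Ioi 0 = Set.Ioo q 1 := by
  have hq' : 0 < 1 - q := sub_pos.2 hq
  ext X
  constructor
  · rintro ⟨s, hs, rfl⟩
    have hs : 0 < s := hs
    have hinv : (1 + s)⁻¹ < 1 := inv_lt_one_of_one_lt₀ (by linarith)
    exact ⟨lt_add_of_pos_right q (by positivity),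
      by linarith [mul_lt_mul_of_pos_left hinv hq']⟩
  · intro hX
    have hqX := sub_pos.2 hX.1
    refine ⟨(1 - X) / (X - q), div_pos (sub_pos.2 hX.2) hqX, ?_⟩
    have : 1 + (1 - X) / (X - q) = (1 - q) / (X - q) := by
      field_simp
      ring
    simp only [this, inv_div]
    field_simp
    ring

lemma ellipticIntegral_eq_cubicIntegral {q : ℝ} (p : ℝ) (hq₀ : -1 < q) (hq : q < 1) :
    ellipticIntegral q p = cubicIntegral (1 + q) (1 - p) 2 (q - p) := by
  have hinj : Set.InjOn (fun s ↦ q + (1 - q) * (1 + s)⁻¹) (Set.Ioi 0) := fun s _ t _ hst ↦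
    add_left_cancel (inv_injective (mul_left_cancel₀ (sub_pos.2 hq).ne' (add_left_cancel hst)))
  have hderiv (s : ℝ) (hs : s ∈ Set.Ioi (0 : ℝ)) :
      HasDerivWithinAt (fun s ↦ q + (1 - q) * (1 + s)⁻¹) ((1 - q) * (-1 / (1 + s) ^ 2))
        (Set.Ioi 0) s :=
    ((((hasDerivAt_id s).const_add 1).inv (add_pos one_pos hs).ne').const_mul
      (1 - q)).const_add q |>.hasDerivWithinAt
  rw [ellipticIntegral, ← image_mobius_Ioi hq,
    integral_image_eq_integral_abs_deriv_smul measurableSet_Ioi hderiv hinj, cubicIntegral]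
  refine setIntegral_congr_fun measurableSet_Ioi fun s hs ↦ ?_
  have hs : 0 < s := hs
  have hq₁ : 0 < 1 - q := sub_pos.2 hq
  have hq₂ : 0 < 1 + q := by linarith
  have hone_sub_sq : 1 - (q + (1 - q) * (1 + s)⁻¹) ^ 2 =
      (1 - q) * s * (2 + (1 + q) * s) / (1 + s) ^ 2 := by
    field_simp
    ring
  have hquartic : (1 - q) * s * (2 + (1 + q) * s) / (1 + s) ^ 2 *
      ((q + (1 - q) * (1 + s)⁻¹ - p) * (q + (1 - q) * (1 + s)⁻¹ - q)) =
      ((1 - q) / (1 + s) ^ 2) ^ 2 * (s * ((2 + (1 + q) * s) * (1 - p + (q - p) * s))) := by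
    field_simp
    ring
  simp only [smul_eq_mul]
  rw [hone_sub_sq, ← invSqrt_mul (by positivity), hquartic, invSqrt_sq_mul (by positivity),
    mul_div_assoc', mul_neg, mul_one, neg_div, abs_neg, abs_of_pos (by positivity),
    mul_inv_cancel_left₀ (by positivity)]

lemma ellipticIntegral_neg {p q : ℝ} (hp : -1 < p) (hpq : p < q) (hq : q < 1) :
    ellipticIntegral (-p) (-q) = ellipticIntegral q p := by
  rw [ellipticIntegral_eq_cubicIntegral (-q) (by linarith) (by linarith),
    ellipticIntegral_eq_cubicIntegral p (by linarith) hq,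
    cubicIntegral_comm _ _ two_pos (sub_pos.2 hpq)]
  congr 1 <;> ring

end EllipticIntegral

section PlaneIntegrals

variable {E : Type*} [NormedAddCommGroup E] {S : Set (ℝ × ℝ)} {F : ℝ × ℝ → E}

lemma volume_fst_eq_snd : volume {p : ℝ × ℝ | p.1 = p.2} = 0 := by
  rw [Measure.volume_eq_prod,
    Measure.measure_prod_null (measurableSet_eq_fun measurable_fst measurable_snd)]
  refine ae_of_all _ fun x ↦ ?_
  have hsection : Prod.mk x ⁻¹' {p : ℝ × ℝ | p.1 = p.2} = {x} := by
    ext y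
    exact eq_comm
  exact (congrArg volume hsection).trans volume_singleton

lemma measurableSet_fst_lt_snd : MeasurableSet {p : ℝ × ℝ | p.1 < p.2} :=
  measurableSet_lt measurable_fst measurable_snd

/-- The pair whose half difference and half sum are the given coordinates. -/
def ofHalfDiffSum (q : ℝ × ℝ) : ℝ × ℝ := (q.2 - q.1, q.1 + q.2)

@[fun_prop]
lemma continuous_ofHalfDiffSum : Continuous ofHalfDiffSum := by
  unfold ofHalfDiffSum
  fun_prop

lemma measurableEmbedding_ofHalfDiffSum : MeasurableEmbedding ofHalfDiffSum := by
  refine continuous_ofHalfDiffSum.measurableEmbedding fun p q hpq ↦ ?_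
  obtain ⟨hsub, hadd⟩ := Prod.mk.inj hpq
  ext <;> linarith

lemma map_ofHalfDiffSum_volume :
    Measure.map ofHalfDiffSum volume = ENNReal.ofReal (1 / 2) • volume := by
  let L : (ℝ × ℝ) →ₗ[ℝ] (ℝ × ℝ) :=
    Matrix.toLin (Module.Basis.finTwoProd ℝ) (Module.Basis.finTwoProd ℝ) !![-1, 1; 1, 1]
  have hdet : LinearMap.det L = -2 := by
    rw [LinearMap.det_toLin, Matrix.det_fin_two_of]
    norm_num
  have hL : ofHalfDiffSum = L := by
    ext p <;> simp [L, Matrix.toLin_finTwoProd_apply, ofHalfDiffSum, sub_eq_neg_add]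
  rw [hL, Measure.map_linearMap_addHaar_eq_smul_addHaar _ (by rw [hdet]; norm_num), hdet]
  norm_num

lemma integrableOn_comp_ofHalfDiffSum (hF : IntegrableOn F S) :
    IntegrableOn (fun q ↦ F (ofHalfDiffSum q)) (ofHalfDiffSum ⁻¹' S) := by
  rw [← Function.comp_def, ← measurableEmbedding_ofHalfDiffSum.integrableOn_map_iff,
    map_ofHalfDiffSum_volume, IntegrableOn, Measure.restrict_smul]
  exact Integrable.smul_measure hF ENNReal.ofReal_ne_top

variable [NormedSpace ℝ E]

lemma setIntegral_eq_setIntegral_inter_fst_lt_snd (hS : MeasurableSet S)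
    (hswap : ∀ p ∈ S, p.swap ∈ S) (hF : IntegrableOn F (S ∩ {p | p.1 < p.2}))
    (hF' : IntegrableOn (fun p ↦ F p.swap) (S ∩ {p | p.1 < p.2})) :
    IntegrableOn F S ∧ ∫ p in S, F p = ∫ p in S ∩ {p | p.1 < p.2}, (F p + F p.swap) := by
  set L := S ∩ {p | p.1 < p.2}
  have hmeas : MeasurableSet L := hS.inter measurableSet_fst_lt_snd
  have hpres : MeasurePreserving (Prod.swap : ℝ × ℝ → ℝ × ℝ) := Measure.measurePreserving_swap
  have hemb : MeasurableEmbedding (Prod.swap : ℝ × ℝ → ℝ × ℝ) :=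
    MeasurableEquiv.prodComm.measurableEmbedding
  have hcover : S =ᵐ[volume] (L ∪ Prod.swap ⁻¹' L : Set (ℝ × ℝ)) := by
    have hdiag : ∀ᵐ p : ℝ × ℝ, p.1 ≠ p.2 := by
      simpa only [ae_iff, not_not] using volume_fst_eq_snd
    filter_upwards [hdiag] with p hp
    refine propext ⟨fun hpS ↦ ?_, ?_⟩
    · exact hp.lt_or_gt.imp (fun h ↦ ⟨hpS, h⟩) fun h ↦ ⟨hswap p hpS, h⟩
    · rintro (h | h)
      exacts [h.1, hswap _ h.1]
  have hdisj : Disjoint L (Prod.swap ⁻¹' L) :=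
    Set.disjoint_left.2 fun p h₁ h₂ ↦ lt_asymm (α := ℝ) h₁.2 h₂.2
  have hint : IntegrableOn F (Prod.swap ⁻¹' L) := (hpres.integrableOn_comp_preimage hemb).2 hF'
  refine ⟨(hF.union hint).congr_set_ae hcover, ?_⟩
  rw [setIntegral_congr_set hcover, setIntegral_union hdisj (hpres.measurable hmeas) hF hint,
    MeasureTheory.integral_add hF hF', ← hpres.setIntegral_preimage_emb hemb (fun p ↦ F p.swap) L]
  simp only [Prod.swap_swap]

lemma setIntegral_eq_integral_sections (hS : MeasurableSet S) (hF : IntegrableOn F S) :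
    Integrable (fun x ↦ ∫ y in Prod.mk x ⁻¹' S, F (x, y)) ∧
      ∫ p in S, F p = ∫ x, ∫ y in Prod.mk x ⁻¹' S, F (x, y) := by
  have hF' : Integrable (S.indicator F) (volume.prod volume) := (integrable_indicator_iff hS).2 hF
  have hsection (x : ℝ) :
      ∫ y, S.indicator F (x, y) = ∫ y in Prod.mk x ⁻¹' S, F (x, y) :=
    MeasureTheory.integral_indicator (measurable_prodMk_left hS)
  refine ⟨by simpa only [hsection] using hF'.integral_prod_left, ?_⟩
  rw [← MeasureTheory.integral_indicator hS, Measure.volume_eq_prod, integral_prod _ hF']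
  simp only [hsection]

lemma setIntegral_eq_two_smul_comp_ofHalfDiffSum (S : Set (ℝ × ℝ)) (F : ℝ × ℝ → E) :
    ∫ p in S, F p = (2 : ℝ) • ∫ q in ofHalfDiffSum ⁻¹' S, F (ofHalfDiffSum q) := by
  rw [← measurableEmbedding_ofHalfDiffSum.setIntegral_map F, map_ofHalfDiffSum_volume,
    Measure.restrict_smul, MeasureTheory.integral_smul_measure, smul_smul,
    ENNReal.toReal_ofReal (by norm_num), mul_one_div_cancel two_ne_zero, one_smul]

end PlaneIntegrals

section TriangleIntegral

/-- The square `(0, π) × (0, π)` of pairs of Mehler angles. -/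
def angleSquare : Set (ℝ × ℝ) := Set.Ioo 0 π ×ˢ Set.Ioo 0 π

/-- The pairs of Mehler angles `0 < β < γ < π`, one half of `angleSquare`. -/
def angleTriangle : Set (ℝ × ℝ) := angleSquare ∩ {p | p.1 < p.2}

/-- The product of the two Mehler–Dirichlet kernels in a product of two Mehler integrals at `x`. -/
noncomputable def mehlerWeight (x : ℝ) (p : ℝ × ℝ) : ℝ :=
  invSqrt (cos p.1 - x) * invSqrt (cos p.2 - x)

/-- The integral of `F` over `angleTriangle` against the Mehler weight at `x`. -/
noncomputable def triangleIntegral (x : ℝ) (F : ℝ × ℝ → ℂ) : ℂ :=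
  ∫ p in angleTriangle, mehlerWeight x p • F p

variable {x : ℝ} {F : ℝ × ℝ → ℂ}

lemma measurableSet_angleSquare : MeasurableSet angleSquare :=
  measurableSet_Ioo.prod measurableSet_Ioo

lemma measurableSet_angleTriangle : MeasurableSet angleTriangle :=
  measurableSet_angleSquare.inter measurableSet_fst_lt_snd

lemma swap_mem_angleSquare {p : ℝ × ℝ} (hp : p ∈ angleSquare) : p.swap ∈ angleSquare :=
  Set.mk_mem_prod hp.2 hp.1

lemma mehlerWeight_swap (x : ℝ) (p : ℝ × ℝ) : mehlerWeight x p.swap = mehlerWeight x p :=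
  mul_comm _ _

lemma integrableOn_prod_mul_angleSquare {f : ℝ → ℝ} (hf : IntegrableOn f (Set.Ioo 0 π)) :
    IntegrableOn (fun p ↦ f p.1 * f p.2) angleSquare := by
  rw [IntegrableOn, Measure.volume_eq_prod, angleSquare, ← Measure.prod_restrict]
  exact hf.mul_prod hf

lemma integrableOn_smul_angleSquare {w : ℝ × ℝ → ℝ} (hw : IntegrableOn w angleSquare)
    (hF : Continuous F) : IntegrableOn (fun p ↦ w p • F p) angleSquare :=
  hw.smul_continuousOn_of_subset hF.continuousOn measurableSet_angleSquare
    (isCompact_Icc.prod isCompact_Icc)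
    (Set.prod_mono Set.Ioo_subset_Icc_self Set.Ioo_subset_Icc_self)

lemma integrableOn_mehlerWeight_smul (hx : -1 < x) (hF : Continuous F) :
    IntegrableOn (fun p ↦ mehlerWeight x p • F p) angleSquare :=
  integrableOn_smul_angleSquare
    (integrableOn_prod_mul_angleSquare (integrableOn_invSqrt_cos_sub hx)) hF

/-- The pairs of positive numbers with sum less than `π`: the pairs (half difference, half sum) of
points of `angleTriangle`, together with their mirror images in the diagonal. -/
def halfAngleTriangle : Set (ℝ × ℝ) := {q | 0 < q.1 ∧ 0 < q.2 ∧ q.1 + q.2 < π}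

lemma measurableSet_halfAngleTriangle : MeasurableSet halfAngleTriangle :=
  (measurableSet_lt measurable_const measurable_fst).inter
    ((measurableSet_lt measurable_const measurable_snd).inter
      (measurableSet_lt (measurable_fst.add measurable_snd) measurable_const))

lemma preimage_ofHalfDiffSum_angleTriangle :
    ofHalfDiffSum ⁻¹' angleTriangle = halfAngleTriangle ∩ {q | q.1 < q.2} := by
  ext q
  simp only [angleTriangle, angleSquare, halfAngleTriangle, ofHalfDiffSum, Set.mem_preimage,
    Set.mem_inter_iff, Set.mem_prod, Set.mem_Ioo, Set.mem_ofPred_eq]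
  grind

lemma preimage_mk_halfAngleTriangle {δ : ℝ} (hδ : 0 < δ) :
    Prod.mk δ ⁻¹' halfAngleTriangle = Set.Ioo 0 (π - δ) := by
  ext τ
  simp only [halfAngleTriangle, Set.mem_preimage, Set.mem_ofPred_eq, Set.mem_Ioo]
  grind

lemma preimage_mk_halfAngleTriangle_of_nonpos {δ : ℝ} (hδ : δ ≤ 0) :
    Prod.mk δ ⁻¹' halfAngleTriangle = ∅ :=
  Set.eq_empty_of_forall_notMem fun _ h ↦ h.1.not_ge hδ

lemma mehlerWeight_ofHalfDiffSum_swap (x : ℝ) (q : ℝ × ℝ) :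
    mehlerWeight x (ofHalfDiffSum q.swap) = mehlerWeight x (ofHalfDiffSum q) := by
  rw [mehlerWeight, mehlerWeight, ofHalfDiffSum, ofHalfDiffSum, Prod.fst_swap, Prod.snd_swap,
    ← cos_neg (q.1 - q.2), neg_sub, add_comm q.2]

lemma triangleIntegral_halfDiff_add_halfSum (hx : -1 < x) {f : ℝ → ℂ} (hf : Continuous f) :
    IntegrableOn (fun q ↦ mehlerWeight x (ofHalfDiffSum q) • f q.1) halfAngleTriangle ∧
      triangleIntegral x (fun p ↦ f ((p.2 - p.1) / 2) + f ((p.1 + p.2) / 2)) =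
        (2 : ℝ) • ∫ q in halfAngleTriangle, mehlerWeight x (ofHalfDiffSum q) • f q.1 := by
  have hdiff (q : ℝ × ℝ) : ((ofHalfDiffSum q).2 - (ofHalfDiffSum q).1) / 2 = q.1 := by
    rw [ofHalfDiffSum]
    ring
  have hsum (q : ℝ × ℝ) : ((ofHalfDiffSum q).1 + (ofHalfDiffSum q).2) / 2 = q.2 := by
    rw [ofHalfDiffSum]
    ring
  have hint {F : ℝ × ℝ → ℂ} (hF : Continuous F) :
      IntegrableOn (fun p ↦ mehlerWeight x p • F p) angleTriangle :=
    (integrableOn_mehlerWeight_smul hx hF).mono_set Set.inter_subset_left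
  have hfst := integrableOn_comp_ofHalfDiffSum
    (hint (F := fun p ↦ f ((p.2 - p.1) / 2)) (by fun_prop))
  have hsnd := integrableOn_comp_ofHalfDiffSum
    (hint (F := fun p ↦ f ((p.1 + p.2) / 2)) (by fun_prop))
  simp only [hdiff, hsum, preimage_ofHalfDiffSum_angleTriangle] at hfst hsnd
  obtain ⟨hintegrable, hval⟩ := setIntegral_eq_setIntegral_inter_fst_lt_snd
    measurableSet_halfAngleTriangle (fun q hq ↦ ⟨hq.2.1, hq.1, by rw [add_comm]; exact hq.2.2⟩)
    hfst (by simpa only [mehlerWeight_ofHalfDiffSum_swap, Prod.fst_swap] using hsnd)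
  refine ⟨hintegrable, ?_⟩
  rw [triangleIntegral, setIntegral_eq_two_smul_comp_ofHalfDiffSum,
    preimage_ofHalfDiffSum_angleTriangle, hval]
  simp only [hdiff, hsum, mehlerWeight_ofHalfDiffSum_swap, smul_add, Prod.fst_swap]

section EllipticReduction

variable {θ δ : ℝ}

lemma mehlerWeight_ofHalfDiffSum_of_le (hθ : 0 < θ) {τ : ℝ} (hτ : θ - δ ≤ τ)
    (hτπ : τ < π - δ) : mehlerWeight (cos θ) (ofHalfDiffSum (δ, τ)) = 0 := by
  have hcos : cos (δ + τ) ≤ cos θ := cos_le_cos_of_nonneg_of_le_pi hθ.le (by linarith) (by linarith)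
  simp only [mehlerWeight, ofHalfDiffSum]
  rw [invSqrt_of_nonpos (sub_nonpos.2 hcos), mul_zero]

lemma mehlerWeight_ofHalfDiffSum_of_lt (hθ : θ < π) (hδ : 0 < δ) {τ : ℝ} (hτ : 0 < τ)
    (hτδ : τ < θ - δ) : mehlerWeight (cos θ) (ofHalfDiffSum (δ, τ)) =
      invSqrt ((cos τ - cos (θ + δ)) * (cos τ - cos (θ - δ))) := by
  have hcos : cos θ ≤ cos (δ + τ) :=
    cos_le_cos_of_nonneg_of_le_pi (by linarith) (by linarith) (by linarith)
  have hfactor : (cos τ - cos (θ + δ)) * (cos τ - cos (θ - δ)) =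
      (cos (δ + τ) - cos θ) * (cos (τ - δ) - cos θ) := by
    simp only [cos_add, cos_sub]
    linear_combination (sin δ ^ 2) * sin_sq_add_cos_sq τ - (sin δ ^ 2) * sin_sq_add_cos_sq θ -
      (cos τ ^ 2 - cos θ ^ 2) * sin_sq_add_cos_sq δ
  rw [hfactor, invSqrt_mul (sub_nonneg.2 hcos), mehlerWeight, ofHalfDiffSum, mul_comm]

lemma integral_mehlerWeight_ofHalfDiffSum (hθ : θ < π) (hδ : 0 < δ) (hδθ : δ < θ) :
    ∫ τ in Set.Ioo 0 (π - δ), mehlerWeight (cos θ) (ofHalfDiffSum (δ, τ)) =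
      ellipticIntegral (cos (θ - δ)) (cos (θ + δ)) := by
  have hsubset : Set.Ioo 0 (θ - δ) ⊆ Set.Ioo 0 (π - δ) :=
    Set.Ioo_subset_Ioo_right (by linarith)
  have hsupport (τ) (hτ : τ ∈ Set.Ioo 0 (π - δ) \ Set.Ioo 0 (θ - δ)) :
      mehlerWeight (cos θ) (ofHalfDiffSum (δ, τ)) = 0 :=
    mehlerWeight_ofHalfDiffSum_of_le (hδ.trans hδθ) (not_lt.1 fun h ↦ hτ.2 ⟨hτ.1.1, h⟩) hτ.1.2
  rw [setIntegral_eq_of_subset_of_forall_sdiff_eq_zero measurableSet_Ioo hsubset hsupport,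
    setIntegral_congr_fun measurableSet_Ioo fun τ hτ ↦
      mehlerWeight_ofHalfDiffSum_of_lt hθ hδ hτ.1 hτ.2]
  exact integral_comp_cos ⟨by linarith, by linarith⟩
    fun X ↦ invSqrt ((X - cos (θ + δ)) * (X - cos (θ - δ)))

lemma integral_section_halfAngleTriangle (hθ : θ ∈ Set.Ioo 0 π) (f : ℝ → ℂ) (δ : ℝ) :
    ∫ τ in Prod.mk δ ⁻¹' halfAngleTriangle, mehlerWeight (cos θ) (ofHalfDiffSum (δ, τ)) • f δ =
      (Set.Ioo 0 θ).indicator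
        (fun δ ↦ ellipticIntegral (cos (θ - δ)) (cos (θ + δ)) • f δ) δ := by
  by_cases hδ : δ ∈ Set.Ioo 0 θ
  · rw [Set.indicator_of_mem hδ, preimage_mk_halfAngleTriangle hδ.1,
      _root_.integral_smul_const, integral_mehlerWeight_ofHalfDiffSum hθ.2 hδ.1 hδ.2]
  · rw [Set.indicator_of_notMem hδ]
    rcases le_or_gt δ 0 with hδ₀ | hδ₀
    · rw [preimage_mk_halfAngleTriangle_of_nonpos hδ₀, setIntegral_empty]
    · have hθδ : θ ≤ δ := not_lt.1 fun h ↦ hδ ⟨hδ₀, h⟩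
      rw [preimage_mk_halfAngleTriangle hδ₀]
      refine setIntegral_eq_zero_of_forall_eq_zero fun τ hτ ↦ ?_
      rw [mehlerWeight_ofHalfDiffSum_of_le hθ.1 (by linarith [hτ.1]) hτ.2, zero_smul]

lemma triangleIntegral_eq_integral_ellipticIntegral (hθ : θ ∈ Set.Ioo 0 π) {f : ℝ → ℂ}
    (hf : Continuous f) :
    IntervalIntegrable (fun δ ↦ ellipticIntegral (cos (θ - δ)) (cos (θ + δ)) • f δ) volume 0 θ ∧
      triangleIntegral (cos θ) (fun p ↦ f ((p.2 - p.1) / 2) + f ((p.1 + p.2) / 2)) =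
        (2 : ℝ) • ∫ δ in (0)..θ, ellipticIntegral (cos (θ - δ)) (cos (θ + δ)) • f δ := by
  have hx : -1 < cos θ := cos_pi ▸ cos_lt_cos_of_nonneg_of_le_pi hθ.1.le le_rfl hθ.2
  obtain ⟨hint, hval⟩ := triangleIntegral_halfDiff_add_halfSum hx hf
  obtain ⟨hint', hval'⟩ := setIntegral_eq_integral_sections measurableSet_halfAngleTriangle hint
  simp only [integral_section_halfAngleTriangle hθ] at hint' hval'
  rw [integrable_indicator_iff measurableSet_Ioo] at hint'
  rw [MeasureTheory.integral_indicator measurableSet_Ioo] at hval'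
  rw [intervalIntegrable_iff_integrableOn_Ioo_of_le hθ.1.le, integral_of_le hθ.1.le,
    integral_Ioc_eq_integral_Ioo, hval, hval']
  exact ⟨hint', rfl⟩

lemma cos_lt_one_of_mem_Ioo {t : ℝ} (ht : t ∈ Set.Ioo (-π) π) (ht₀ : t ≠ 0) : cos t < 1 :=
  (cos_le_one t).lt_of_ne fun h ↦ ht₀ <|
    (cos_eq_one_iff_of_lt_of_lt (by linarith [ht.1, pi_pos]) (by linarith [ht.2, pi_pos])).1 h

lemma ellipticIntegral_cos_pi_sub (hθ : θ ∈ Set.Ioo 0 π) (hδ : δ ∈ Set.Ioo 0 π) (hne : θ ≠ δ)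
    (hsum : θ + δ ≠ π) :
    ellipticIntegral (cos (π - θ - δ)) (cos (π - θ + δ)) =
      ellipticIntegral (cos (θ - δ)) (cos (θ + δ)) := by
  have hp : -1 < cos (θ + δ) := by
    rw [neg_lt, ← cos_sub_pi]
    exact cos_lt_one_of_mem_Ioo ⟨by linarith [hθ.1, hδ.1], by linarith [hθ.2, hδ.2]⟩
      (sub_ne_zero.2 hsum)
  have hpq : cos (θ + δ) < cos (θ - δ) := by
    rw [cos_add, cos_sub]
    linarith [mul_pos (sin_pos_of_mem_Ioo hθ) (sin_pos_of_mem_Ioo hδ)]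
  have hq : cos (θ - δ) < 1 :=
    cos_lt_one_of_mem_Ioo ⟨by linarith [hθ.1, hδ.2], by linarith [hθ.2, hδ.1]⟩
      (sub_ne_zero.2 hne)
  rw [sub_sub, cos_pi_sub, sub_add, cos_pi_sub, ellipticIntegral_neg hp hpq hq]

lemma integral_ellipticIntegral_smul_eq_zero (hθ : θ ∈ Set.Ioo 0 π) {f : ℝ → ℂ}
    (hanti : ∀ δ, f (π - δ) = -f δ) :
    ∫ δ in θ..(π - θ), ellipticIntegral (cos (θ - δ)) (cos (θ + δ)) • f δ = 0 := by
  have hreflect := intervalIntegral.integral_comp_sub_left (a := θ) (b := π - θ)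
    (fun δ ↦ ellipticIntegral (cos (θ - δ)) (cos (θ + δ)) • f δ) π
  rw [sub_sub_cancel] at hreflect
  rw [← self_eq_neg, ← intervalIntegral.integral_neg, ← hreflect]
  refine intervalIntegral.integral_congr_uIoo fun δ hδ ↦ ?_
  obtain ⟨hmem, hne, hsum⟩ : δ ∈ Set.Ioo 0 π ∧ θ ≠ δ ∧ θ + δ ≠ π := by
    rw [Set.uIoo, Set.mem_Ioo, inf_lt_iff, lt_sup_iff] at hδ
    obtain ⟨hθ₀, hθπ⟩ := hθ
    grind
  have hleft : θ - (π - δ) = -(π - θ - δ) := by ring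
  have hright : θ + (π - δ) = 2 * π - (π - θ + δ) := by ring
  rw [hanti, smul_neg, hleft, hright, cos_neg, cos_two_pi_sub,
    ellipticIntegral_cos_pi_sub hθ hmem hne hsum]

-- The elliptic integral at `δ` is the same for `θ` and `π - θ`, so passing from `-x` to `x` only
-- changes the upper limit of the `δ`-integral, and `f` is odd about `π / 2`.
lemma triangleIntegral_neg_of_antisymm (hx : x ∈ Set.Ioo (-1) 1) {f : ℝ → ℂ} (hf : Continuous f)
    (hanti : ∀ δ, f (π - δ) = -f δ) :
    triangleIntegral (-x) (fun p ↦ f ((p.2 - p.1) / 2) + f ((p.1 + p.2) / 2)) =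
      triangleIntegral x fun p ↦ f ((p.2 - p.1) / 2) + f ((p.1 + p.2) / 2) := by
  obtain ⟨θ, hθ, rfl⟩ : ∃ θ ∈ Set.Ioo 0 π, cos θ = x :=
    ⟨arccos x, ⟨arccos_pos.2 hx.2, arccos_lt_pi.2 hx.1⟩, cos_arccos hx.1.le hx.2.le⟩
  have hθ' : π - θ ∈ Set.Ioo 0 π := ⟨sub_pos.2 hθ.2, sub_lt_self π hθ.1⟩
  have hsymm : ∀ᵐ δ : ℝ, δ ∈ Set.uIoc 0 (π - θ) →
      ellipticIntegral (cos (π - θ - δ)) (cos (π - θ + δ)) • f δ =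
        ellipticIntegral (cos (θ - δ)) (cos (θ + δ)) • f δ := by
    filter_upwards [Measure.ae_ne volume θ, Measure.ae_ne volume (π - θ)] with δ hne hsum hδ
    rw [Set.uIoc_of_le hθ'.1.le] at hδ
    rw [ellipticIntegral_cos_pi_sub hθ ⟨hδ.1, hδ.2.trans_lt hθ'.2⟩ hne.symm
      fun h ↦ hsum (by linarith)]
  obtain ⟨hint, hval⟩ := triangleIntegral_eq_integral_ellipticIntegral hθ hf
  obtain ⟨hint', hval'⟩ := triangleIntegral_eq_integral_ellipticIntegral hθ' hf
  have hint'' := hint'.congr_ae ((ae_restrict_iff' measurableSet_uIoc).2 hsymm)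
  rw [← cos_pi_sub, hval, hval', intervalIntegral.integral_congr_ae hsymm,
    ← sub_eq_zero, ← smul_sub, integral_interval_sub_left hint'' hint,
    integral_ellipticIntegral_smul_eq_zero hθ hanti, smul_zero]

end EllipticReduction

end TriangleIntegral

section MehlerIntegral

/-- The Mehler–Dirichlet integral at `x` with frequency `m`; for `m = ν + 1 / 2` it is `P_ν(x)` up
to a constant. The junk value of `invSqrt` restricts the integration to `cos β > x`. -/
noncomputable def mehlerIntegral (m : ℂ) (x : ℝ) : ℂ :=
  ∫ β in Set.Ioo 0 π, invSqrt (cos β - x) • Complex.cos (m * β)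

/-- The product of the cosines in the Mehler integrals at two opposite points, the second angle
being reflected. -/
noncomputable def crossCos (m : ℂ) (p : ℝ × ℝ) : ℂ :=
  Complex.cos (m * p.1) * Complex.cos (m * ↑(π - p.2))

variable {x : ℝ}

lemma legendreP_eq_mehlerIntegral (ν : ℂ) (hx : x ∈ Set.Ioo (-1) 1) :
    legendreP ν x = (√2 / π : ℝ) * mehlerIntegral (ν + 1 / 2) x := by
  have hsubset : Set.Ioo 0 (arccos x) ⊆ Set.Ioo 0 π := Set.Ioo_subset_Ioo_right (arccos_le_pi x)
  have hsupport (β) (hβ : β ∈ Set.Ioo 0 π \ Set.Ioo 0 (arccos x)) :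
      invSqrt (cos β - x) • Complex.cos ((ν + 1 / 2) * β) = 0 := by
    have hcos : cos β ≤ cos (arccos x) := cos_le_cos_of_nonneg_of_le_pi (arccos_nonneg x)
      hβ.1.2.le (not_lt.1 fun h ↦ hβ.2 ⟨hβ.1.1, h⟩)
    rw [cos_arccos hx.1.le hx.2.le] at hcos
    rw [invSqrt_of_nonpos (sub_nonpos.2 hcos), zero_smul]
  have hkernel (β : ℝ) : Complex.cos ((2 * ν + 1) * β / 2) / (√(2 * (cos β - x)) : ℝ) =
      ((√2)⁻¹ : ℝ) * (invSqrt (cos β - x) • Complex.cos ((ν + 1 / 2) * β)) := by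
    rw [sqrt_mul zero_le_two, invSqrt, Complex.real_smul]
    push_cast
    ring_nf
  rw [legendreP, if_neg hx.2.ne, integral_of_le (arccos_nonneg x), integral_Ioc_eq_integral_Ioo,
    mehlerIntegral, setIntegral_eq_of_subset_of_forall_sdiff_eq_zero measurableSet_Ioo hsubset
      hsupport]
  simp only [hkernel]
  rw [MeasureTheory.integral_const_mul, ← mul_assoc, ← Complex.ofReal_mul, div_mul_eq_mul_div,
    ← div_eq_mul_inv, div_sqrt]

lemma setIntegral_Ioo_comp_sub_left {E : Type*} [NormedAddCommGroup E] [NormedSpace ℝ E] (c : ℝ)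
    (f : ℝ → E) : ∫ t in Set.Ioo 0 c, f (c - t) = ∫ t in Set.Ioo 0 c, f t := by
  have hreflect := (Measure.measurePreserving_sub_left volume c).setIntegral_preimage_emb
    (measurableEmbedding_subLeft c) f (Set.Ioo 0 c)
  rwa [Set.preimage_const_sub_Ioo, sub_self, sub_zero] at hreflect

lemma mehlerIntegral_neg (m : ℂ) (x : ℝ) : mehlerIntegral m (-x) =
    ∫ γ in Set.Ioo 0 π, invSqrt (x - cos γ) • Complex.cos (m * ↑(π - γ)) := by
  rw [mehlerIntegral, ← setIntegral_Ioo_comp_sub_left]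
  simp only [cos_pi_sub, sub_neg_eq_add, neg_add_eq_sub]

section SquareDifference

lemma continuous_crossCos (m : ℂ) : Continuous (crossCos m) := by
  unfold crossCos
  fun_prop

lemma mehlerIntegral_sq (m : ℂ) (hx : -1 < x) : mehlerIntegral m x ^ 2 =
    2 * triangleIntegral x fun p ↦ Complex.cos (m * p.1) * Complex.cos (m * p.2) := by
  have hint := (integrableOn_mehlerWeight_smul hx
    (F := fun p ↦ Complex.cos (m * p.1) * Complex.cos (m * p.2)) (by fun_prop)).mono_set
      (Set.inter_subset_left (t := {p | p.1 < p.2}))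
  have hswap (p : ℝ × ℝ) : mehlerWeight x p.swap •
      (Complex.cos (m * p.swap.1) * Complex.cos (m * p.swap.2)) =
      mehlerWeight x p • (Complex.cos (m * p.1) * Complex.cos (m * p.2)) := by
    rw [mehlerWeight_swap, Prod.fst_swap, Prod.snd_swap, mul_comm (Complex.cos _)]
  have hsymm := (setIntegral_eq_setIntegral_inter_fst_lt_snd measurableSet_angleSquare
    (fun p ↦ swap_mem_angleSquare) hint (by simpa only [hswap] using hint)).2
  simp only [hswap, ← two_mul] at hsymm
  rw [sq, mehlerIntegral, ← setIntegral_prod_mul, triangleIntegral,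
    ← MeasureTheory.integral_const_mul, angleTriangle, ← hsymm]
  simp only [smul_mul_smul_comm]
  rfl

lemma two_mul_cos_mul_cos_eq (a b c : ℂ) : 2 * (Complex.cos a * Complex.cos b) =
    2 * Complex.cos c * (Complex.cos a * Complex.cos (c - b)) +
      Complex.sin c * (Complex.sin (c - (b - a)) + Complex.sin (c - (a + b))) := by
  simp only [Complex.cos_sub, Complex.sin_sub, Complex.cos_add, Complex.sin_add]
  linear_combination
    (-2 * Complex.cos a * Complex.cos b) * Complex.sin_sq_add_cos_sq c

lemma mehlerIntegral_sq_eq_triangleIntegral_crossCos (m : ℂ) (hx : -1 < x) :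
    mehlerIntegral m x ^ 2 = 2 * Complex.cos (m * π) * triangleIntegral x (crossCos m) +
      Complex.sin (m * π) * triangleIntegral x fun p ↦
        Complex.sin (m * (π - 2 * ((p.2 - p.1) / 2 : ℝ))) +
          Complex.sin (m * (π - 2 * ((p.1 + p.2) / 2 : ℝ))) := by
  have hint {F : ℝ × ℝ → ℂ} (hF : Continuous F) :
      IntegrableOn (fun p ↦ mehlerWeight x p • F p) angleTriangle :=
    (integrableOn_mehlerWeight_smul hx hF).mono_set Set.inter_subset_left
  simp only [mehlerIntegral_sq m hx, triangleIntegral, ← MeasureTheory.integral_const_mul]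
  rw [← MeasureTheory.integral_add ((hint (continuous_crossCos m)).const_mul _)
    ((hint (by fun_prop)).const_mul _)]
  congr 1 with p
  have htrig := two_mul_cos_mul_cos_eq (m * p.1) (m * p.2) (m * π)
  simp only [mul_smul_comm, ← smul_add, htrig, crossCos]
  push_cast
  ring_nf

lemma mehlerIntegral_sq_sub_sq (m : ℂ) (hx : x ∈ Set.Ioo (-1) 1) :
    mehlerIntegral m x ^ 2 - mehlerIntegral m (-x) ^ 2 = 2 * Complex.cos (m * π) *
      (triangleIntegral x (crossCos m) - triangleIntegral (-x) (crossCos m)) := by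
  have hsin := triangleIntegral_neg_of_antisymm hx
    (f := fun δ ↦ Complex.sin (m * (π - 2 * δ))) (by fun_prop) fun δ ↦ by
      rw [← Complex.sin_neg]
      push_cast
      ring_nf
  rw [mehlerIntegral_sq_eq_triangleIntegral_crossCos m hx.1,
    mehlerIntegral_sq_eq_triangleIntegral_crossCos m (neg_lt_neg hx.2), hsin]
  ring

end SquareDifference

section PrincipalValue

variable (m : ℂ) {ε : ℝ}

lemma triangleIntegral_neg_crossCos (x : ℝ) : triangleIntegral (-x) (crossCos m) =
    ∫ p in angleTriangle, (invSqrt (x - cos p.1) * invSqrt (x - cos p.2)) • crossCos m p := by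
  let e : ℝ × ℝ ≃ᵐ ℝ × ℝ := MeasurableEquiv.prodComm.trans
    ((MeasurableEquiv.subLeft π).prodCongr (MeasurableEquiv.subLeft π))
  have he : MeasurePreserving e := (((Measure.measurePreserving_sub_left volume π).prod
    (Measure.measurePreserving_sub_left volume π))).comp Measure.measurePreserving_swap
  have hpreimage : e ⁻¹' angleTriangle = angleTriangle := by
    ext p
    change (π - p.2, π - p.1) ∈ angleTriangle ↔ p ∈ angleTriangle
    simp only [angleTriangle, angleSquare, Set.mem_inter_iff, Set.mem_prod, Set.mem_Ioo,
      Set.mem_ofPred_eq]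
    grind
  rw [triangleIntegral, ← he.setIntegral_preimage_emb e.measurableEmbedding, hpreimage]
  congr 1 with p
  change mehlerWeight (-x) (π - p.2, π - p.1) • crossCos m (π - p.2, π - p.1) = _
  simp only [mehlerWeight, crossCos, cos_pi_sub, sub_neg_eq_add, neg_add_eq_sub, sub_sub_cancel]
  rw [mul_comm (Complex.cos _), mul_comm (invSqrt _)]

lemma mehlerIntegral_mul_mehlerIntegral_neg (ξ : ℝ) :
    mehlerIntegral m ξ * mehlerIntegral m (-ξ) =
      ∫ p in angleSquare, arcsineKernel (cos p.2) (cos p.1) ξ • crossCos m p := by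
  rw [mehlerIntegral_neg, mehlerIntegral, ← setIntegral_prod_mul]
  simp only [smul_mul_smul_comm]
  rfl

lemma mehlerIntegral_of_one_le (hx : 1 ≤ x) : mehlerIntegral m x = 0 :=
  setIntegral_eq_zero_of_forall_eq_zero fun β _ ↦ by
    rw [invSqrt_of_nonpos (by linarith [cos_le_one β]), zero_smul]

lemma mehlerIntegral_mul_mehlerIntegral_neg_of_notMem (hx : x ∉ Set.Ioo (-1) 1) :
    mehlerIntegral m x * mehlerIntegral m (-x) = 0 := by
  rcases lt_or_ge x 1 with h | h
  · rw [mehlerIntegral_of_one_le m (x := -x) (le_neg.2 (not_lt.1 fun h' ↦ hx ⟨h', h⟩)), mul_zero]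
  · rw [mehlerIntegral_of_one_le m h, zero_mul]

lemma integrable_arcsineKernel_cos :
    Integrable (fun q : (ℝ × ℝ) × ℝ ↦ arcsineKernel (cos q.1.2) (cos q.1.1) q.2)
      ((volume.restrict angleSquare).prod volume) := by
  have hmeas : Measurable fun q : (ℝ × ℝ) × ℝ ↦ arcsineKernel (cos q.1.2) (cos q.1.1) q.2 := by
    unfold arcsineKernel
    fun_prop
  have hfinite : volume angleSquare ≠ ⊤ := by
    rw [Measure.volume_eq_prod, angleSquare, Measure.prod_prod]
    exact ENNReal.mul_ne_top measure_Ioo_lt_top.ne measure_Ioo_lt_top.ne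
  refine (integrable_prod_iff hmeas.aestronglyMeasurable).2
    ⟨ae_of_all _ fun p ↦ integrable_arcsineKernel (cos p.2) (cos p.1), ?_⟩
  refine (integrableOn_const (C := π) hfinite).mono'
    hmeas.norm.stronglyMeasurable.integral_prod_right.aestronglyMeasurable (ae_of_all _ fun p ↦ ?_)
  simp only [norm_of_nonneg (arcsineKernel_nonneg _ _ _)]
  rw [norm_of_nonneg (integral_nonneg fun _ ↦ arcsineKernel_nonneg _ _ _)]
  exact integral_arcsineKernel_le _ _

lemma exists_norm_crossCos_le : ∃ M, ∀ p ∈ angleSquare, ‖crossCos m p‖ ≤ M := by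
  obtain ⟨M, hM⟩ := (isCompact_Icc.prod isCompact_Icc).exists_bound_of_continuousOn
    (s := Set.Icc 0 π ×ˢ Set.Icc 0 π) (continuous_crossCos m).continuousOn
  exact ⟨M, fun p hp ↦
    hM p (Set.prod_mono Set.Ioo_subset_Icc_self Set.Ioo_subset_Icc_self hp)⟩

lemma integrable_arcsineKernel_div_sub_smul_crossCos (x : ℝ) (hε : 0 < ε) :
    Integrable (fun q : (ℝ × ℝ) × ℝ ↦
        (arcsineKernel (cos q.1.2) (cos q.1.1) q.2 / (x - q.2)) • crossCos m q.1)
      ((volume.restrict angleSquare).prod (volume.restrict {ξ | ε < |ξ - x|})) := by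
  obtain ⟨M, hM⟩ := exists_norm_crossCos_le m
  have hcont := continuous_crossCos m
  have hint := integrable_arcsineKernel_cos.mono_measure
    (Measure.prod_mono le_rfl (Measure.restrict_le_self (s := {ξ | ε < |ξ - x|})))
  rw [Measure.prod_restrict] at hint ⊢
  have hmem := ae_restrict_mem (μ := (volume : Measure (ℝ × ℝ)).prod volume)
    (measurableSet_angleSquare.prod (measurableSet_lt_abs_sub x ε))
  refine (hint.mul_bdd (c := ε⁻¹) (by fun_prop) ?_).smul_bdd M (by fun_prop) ?_
  · filter_upwards [hmem] with q hq
    rw [norm_inv, norm_eq_abs, abs_sub_comm]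
    exact inv_anti₀ hε (le_of_lt hq.2)
  · filter_upwards [hmem] with q hq
    exact hM q.1 hq.1

lemma integrableOn_truncatedCauchy_smul_crossCos (x : ℝ) (hε : 0 < ε) :
    IntegrableOn (fun p ↦ truncatedCauchy (cos p.2) (cos p.1) x ε • crossCos m p) angleSquare := by
  have hint := (integrable_arcsineKernel_div_sub_smul_crossCos m x hε).integral_prod_left
  simp only [_root_.integral_smul_const] at hint
  exact hint

lemma setIntegral_mehlerIntegral_mul_div (x : ℝ) (hε : 0 < ε) :
    ∫ ξ in {ξ | ε < |ξ - x|}, mehlerIntegral m ξ * mehlerIntegral m (-ξ) / ((x - ξ : ℝ) : ℂ) =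
      ∫ p in angleTriangle, truncatedCauchy (cos p.2) (cos p.1) x ε • crossCos m p := by
  have hinner (ξ : ℝ) : mehlerIntegral m ξ * mehlerIntegral m (-ξ) / ((x - ξ : ℝ) : ℂ) =
      ∫ p in angleSquare, (arcsineKernel (cos p.2) (cos p.1) ξ / (x - ξ)) • crossCos m p := by
    rw [mehlerIntegral_mul_mehlerIntegral_neg, ← MeasureTheory.integral_div]
    congr 1 with p
    simp only [Complex.real_smul]
    push_cast
    ring
  have hoff (p) (hp : p ∈ angleSquare \ angleTriangle) :
      truncatedCauchy (cos p.2) (cos p.1) x ε • crossCos m p = 0 := by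
    have hle : p.2 ≤ p.1 := not_lt.1 fun h ↦ hp.2 ⟨hp.1, h⟩
    rw [truncatedCauchy_of_ge
      (cos_le_cos_of_nonneg_of_le_pi hp.1.2.1.le hp.1.1.2.le hle), zero_smul]
  simp only [hinner]
  rw [← integral_integral_swap (integrable_arcsineKernel_div_sub_smul_crossCos m x hε),
    angleTriangle, ← setIntegral_eq_of_subset_of_forall_sdiff_eq_zero measurableSet_angleSquare
      Set.inter_subset_left hoff]
  simp only [_root_.integral_smul_const, truncatedCauchy]

lemma integrableOn_invSqrt_sub_cos (hx : x < 1) :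
    IntegrableOn (fun β ↦ invSqrt (x - cos β)) (Set.Ioo 0 π) := by
  have hreflect := ((Measure.measurePreserving_sub_left volume π).integrableOn_comp_preimage
    (measurableEmbedding_subLeft π)).2 (integrableOn_invSqrt_cos_sub (neg_lt_neg hx))
  simpa only [Function.comp_def, Set.preimage_const_sub_Ioo, sub_self, sub_zero, cos_pi_sub,
    neg_sub_neg] using hreflect

lemma integrableOn_invSqrt_abs_sub_cos (hx : x ∈ Set.Ioo (-1) 1) :
    IntegrableOn (fun β ↦ invSqrt |x - cos β|) (Set.Ioo 0 π) := by
  simp only [invSqrt_abs, neg_sub]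
  exact (integrableOn_invSqrt_sub_cos hx.2).add (integrableOn_invSqrt_cos_sub hx.1)

lemma ae_ne_cos_of_mem_angleSquare (x : ℝ) :
    ∀ᵐ p : ℝ × ℝ, p ∈ angleSquare → x ≠ cos p.1 ∧ x ≠ cos p.2 := by
  have hne : ∀ᵐ β : ℝ, β ≠ arccos x := Measure.ae_ne volume (arccos x)
  have hcos {β : ℝ} (hβ : β ∈ Set.Ioo 0 π) (hβx : β ≠ arccos x) : x ≠ cos β := by
    rintro rfl
    exact hβx (arccos_cos hβ.1.le hβ.2.le).symm
  filter_upwards [Measure.quasiMeasurePreserving_fst.ae hne,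
    Measure.quasiMeasurePreserving_snd.ae hne] with p hβ hγ hp
  exact ⟨hcos hp.1 hβ, hcos hp.2 hγ⟩

lemma integral_limit_truncatedCauchy_smul_crossCos (hx : x ∈ Set.Ioo (-1) 1) :
    ∫ p in angleTriangle, (π * (invSqrt (x - cos p.2) * invSqrt (x - cos p.1) -
        invSqrt (cos p.2 - x) * invSqrt (cos p.1 - x))) • crossCos m p =
      π * (triangleIntegral (-x) (crossCos m) - triangleIntegral x (crossCos m)) := by
  have hpos := integrableOn_mehlerWeight_smul hx.1 (continuous_crossCos m)
  have hneg := integrableOn_smul_angleSquare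
    (integrableOn_prod_mul_angleSquare (integrableOn_invSqrt_sub_cos hx.2)) (continuous_crossCos m)
  have hsubset : angleTriangle ⊆ angleSquare := Set.inter_subset_left
  rw [triangleIntegral_neg_crossCos, triangleIntegral,
    ← MeasureTheory.integral_sub (hneg.mono_set hsubset) (hpos.mono_set hsubset),
    ← MeasureTheory.integral_const_mul]
  congr 1 with p
  rw [← sub_smul, mehlerWeight, ← Complex.real_smul, smul_smul, mul_comm (invSqrt (x - cos p.2)),
    mul_comm (invSqrt (cos p.2 - x))]

lemma tendsto_setIntegral_mehlerIntegral_mul_div (hx : x ∈ Set.Ioo (-1) 1) :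
    Tendsto (fun ε ↦ ∫ ξ in {ξ | ε < |ξ - x|},
        mehlerIntegral m ξ * mehlerIntegral m (-ξ) / ((x - ξ : ℝ) : ℂ)) (𝓝[>] 0)
      (𝓝 (π * (triangleIntegral (-x) (crossCos m) - triangleIntegral x (crossCos m)))) := by
  have hsubset : angleTriangle ⊆ angleSquare := Set.inter_subset_left
  have hweight := integrableOn_prod_mul_angleSquare (integrableOn_invSqrt_abs_sub_cos hx)
  have hbound := (((integrableOn_smul_angleSquare hweight
    (continuous_crossCos m)).mono_set hsubset).norm).const_mul 4
  have hne : ∀ᵐ p ∂volume.restrict angleTriangle,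
      p ∈ angleTriangle ∧ x ≠ cos p.1 ∧ x ≠ cos p.2 := by
    filter_upwards [ae_restrict_mem measurableSet_angleTriangle,
      ae_restrict_of_ae (ae_ne_cos_of_mem_angleSquare x)] with p hp hcos
    exact ⟨hp, hcos hp.1⟩
  have hpos : ∀ᶠ ε : ℝ in 𝓝[>] 0, 0 < ε := self_mem_nhdsWithin
  rw [← integral_limit_truncatedCauchy_smul_crossCos m hx]
  refine Tendsto.congr' (hpos.mono fun ε hε ↦ (setIntegral_mehlerIntegral_mul_div m x hε).symm) <|
    tendsto_integral_filter_of_dominated_convergence _ (hpos.mono fun ε hε ↦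
      ((integrableOn_truncatedCauchy_smul_crossCos m x hε).mono_set hsubset).aestronglyMeasurable)
      ?_ hbound ?_
  · filter_upwards [hpos] with ε hε
    filter_upwards [hne] with p ⟨_, hβ, hγ⟩
    have hle := abs_truncatedCauchy_le hγ hβ hε
    have hnonneg : 0 ≤ invSqrt |x - cos p.1| * invSqrt |x - cos p.2| :=
      mul_nonneg (invSqrt_nonneg _) (invSqrt_nonneg _)
    rw [norm_smul, norm_smul, ← mul_assoc, norm_eq_abs, norm_of_nonneg hnonneg,
      mul_comm (invSqrt _)]
    exact mul_le_mul_of_nonneg_right hle (norm_nonneg _)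
  · filter_upwards [hne] with p ⟨hp, hβ, hγ⟩
    exact (tendsto_truncatedCauchy
      (cos_lt_cos_of_nonneg_of_le_pi hp.1.1.1.le hp.1.2.2.le hp.2) hγ hβ).smul_const _

end PrincipalValue

end MehlerIntegral

section Legendre

variable {ν : ℂ} {x : ℝ}

lemma sin_mul_pi_ne_zero (hν : ∀ k : ℤ, ν ≠ k) : Complex.sin (ν * π) ≠ 0 := fun h ↦ by
  obtain ⟨k, hk⟩ := Complex.sin_eq_zero_iff.1 h
  exact hν k (mul_right_cancel₀ (Complex.ofReal_ne_zero.2 pi_ne_zero) hk)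

lemma legendreP_mul_legendreP (ν : ℂ) {y : ℝ} (hx : x ∈ Set.Ioo (-1) 1)
    (hy : y ∈ Set.Ioo (-1) 1) : legendreP ν x * legendreP ν y =
      2 / π ^ 2 * (mehlerIntegral (ν + 1 / 2) x * mehlerIntegral (ν + 1 / 2) y) := by
  have hsq : ((√2 / π : ℝ) : ℂ) * (√2 / π : ℝ) = 2 / π ^ 2 := by
    rw [← Complex.ofReal_mul, div_mul_div_comm, mul_self_sqrt zero_le_two, ← sq]
    push_cast
    rfl
  rw [legendreP_eq_mehlerIntegral ν hx, legendreP_eq_mehlerIntegral ν hy, mul_mul_mul_comm, hsq]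

lemma legendreP_sq_sub_sq (ν : ℂ) (hx : x ∈ Set.Ioo (-1) 1) :
    legendreP ν x ^ 2 - legendreP ν (-x) ^ 2 = 4 / π ^ 2 * Complex.sin (ν * π) *
      (triangleIntegral (-x) (crossCos (ν + 1 / 2)) -
        triangleIntegral x (crossCos (ν + 1 / 2))) := by
  have hx' : -x ∈ Set.Ioo (-1) 1 := ⟨neg_lt_neg hx.2, neg_lt.2 hx.1⟩
  have hcos : Complex.cos ((ν + 1 / 2) * π) = -Complex.sin (ν * π) := by
    rw [← Complex.cos_add_pi_div_two]
    ring_nf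
  rw [sq, sq, legendreP_mul_legendreP ν hx hx, legendreP_mul_legendreP ν hx' hx', ← mul_sub,
    ← sq, ← sq, mehlerIntegral_sq_sub_sq _ hx, hcos]
  ring

lemma setIntegral_legendreP_eq_setIntegral_mehlerIntegral (ν : ℂ) (x ε : ℝ) :
    ∫ ξ in {ξ | ξ ∈ Set.Ioo (-1 : ℝ) 1 ∧ ε < |ξ - x|},
        2 * legendreP ν ξ * legendreP ν (-ξ) / ((π * (x - ξ) : ℝ) : ℂ) =
      4 / π ^ 3 * ∫ ξ in {ξ | ε < |ξ - x|},
        mehlerIntegral (ν + 1 / 2) ξ * mehlerIntegral (ν + 1 / 2) (-ξ) / ((x - ξ : ℝ) : ℂ) := by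
  have hmeas := measurableSet_lt_abs_sub x ε
  rw [← MeasureTheory.integral_const_mul,
    setIntegral_eq_of_subset_of_forall_sdiff_eq_zero hmeas
      (s := {ξ | ξ ∈ Set.Ioo (-1 : ℝ) 1 ∧ ε < |ξ - x|}) (fun ξ hξ ↦ hξ.2) fun ξ hξ ↦ ?_]
  · refine setIntegral_congr_fun (measurableSet_Ioo.inter hmeas) fun ξ hξ ↦ ?_
    rw [mul_assoc 2, legendreP_mul_legendreP ν hξ.1 ⟨neg_lt_neg hξ.1.2, neg_lt.2 hξ.1.1⟩]
    push_cast
    field_simp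
    ring
  · rw [mehlerIntegral_mul_mehlerIntegral_neg_of_notMem _ fun h ↦ hξ.2 ⟨h, hξ.1⟩, zero_div,
      mul_zero]

end Legendre

/-- Finite Hilbert (Tricomi) transform of `P_ν(ξ) P_ν(-ξ)`. -/
theorem stmt_17 (ν : ℂ) (hν : ∀ m : ℤ, ν ≠ (m : ℂ)) (x : ℝ) (hx : x ∈ Set.Ioo (-1:ℝ) 1) :
    Tendsto (fun ε : ℝ =>
        ∫ ξ in {ξ : ℝ | ξ ∈ Set.Ioo (-1:ℝ) 1 ∧ ε < |ξ - x|},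
          2 * legendreP ν ξ * legendreP ν (-ξ) / ((π * (x - ξ) : ℝ) : ℂ))
      (𝓝[>] 0)
      (𝓝 (((legendreP ν x)^2 - (legendreP ν (-x))^2) / Complex.sin (ν * (π:ℂ)))) := by
  have hlim := (tendsto_setIntegral_mehlerIntegral_mul_div (ν + 1 / 2) hx).const_mul
    (4 / (π : ℂ) ^ 3)
  have hπ : (π : ℂ) ≠ 0 := Complex.ofReal_ne_zero.2 pi_ne_zero
  have hsin := sin_mul_pi_ne_zero hν
  simp only [setIntegral_legendreP_eq_setIntegral_mehlerIntegral]
  rw [legendreP_sq_sub_sq ν hx, mul_right_comm, mul_div_cancel_right₀ _ hsin]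
  convert hlim using 2
  field_simp
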